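/- Each entry of P_n is a polynomial of degree at most n, and the coefficient of x^n in P_n is the nonsingular diagonal matrix whose (i,i)-entry equals 2^n q^n (q^{2i+2};q²)_n (q^{4ℓ-2i+2};q²)_n / ((q²;q²)_n (q^{4ℓ+4};q²)_n); in particular P_n is a matrix-valued polynomial of degree exactly n with nonsingular leading coefficient. -/

import Mathlib

open Finset Polynomial MeasureTheory Matrix
open scoped BigOperators ComplexOrder

noncomputable section

/-- q-shifted factorial `(a;p)_n`. -/
def qp (a p : ℂ) (n : ℕ) : ℂ := ∏ j ∈ Finset.range n, (1 - a * p ^ j)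

/-- q-Racah polynomial `R_n(μ(x);α,β,γ,δ;p)`. -/
def qRacah (p α β γ δ : ℂ) (n x : ℕ) : ℂ :=
  ∑ k ∈ Finset.range (min n x + 1),
    qp (p ^ (-(n : ℤ))) p k * qp (α * β * p ^ (n + 1)) p k *
        qp (p ^ (-(x : ℤ))) p k * qp (γ * δ * p ^ (x + 1)) p k /
      (qp (α * p) p k * qp (β * δ * p) p k * qp (γ * p) p k * qp p p k) * p ^ k

/-- `IsUltra C` says that for each base `p`, parameter `β` and degree `n`, `C p β n` is
the continuous q-ultraspherical polynomial: it has degree at most `n` and its values at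
`(z+z⁻¹)/2` are given by the symmetric Laurent sum. -/
def IsUltra (C : ℂ → ℂ → ℕ → Polynomial ℂ) : Prop :=
  ∀ (p β : ℂ) (n : ℕ),
    (C p β n).degree ≤ (n : ℕ) ∧
      ∀ z : ℂ, z ≠ 0 →
        (C p β n).eval ((z + z⁻¹) / 2) =
          ∑ r ∈ Finset.range (n + 1),
            qp β p r * qp β p (n - r) / (qp p p r * qp p p (n - r)) * z ^ ((n : ℤ) - 2 * r)

/-- The matrix-valued polynomial `P_n` (entries in `Polynomial ℂ`); here `L = 2ℓ`. -/
def Pm (q : ℂ) (L : ℕ) (C : ℂ → ℂ → ℕ → Polynomial ℂ) (n : ℕ) :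
    Matrix (Fin (L + 1)) (Fin (L + 1)) (Polynomial ℂ) :=
  Matrix.of fun i j =>
    ∑ k ∈ Finset.Icc (i : ℕ) (min L (n + (j : ℕ))),
      Polynomial.C
          ((-1 : ℂ) ^ k *
            q ^ ((n : ℤ) + (2 * (k : ℤ) + 1) * ((k : ℤ) - ((i : ℕ) : ℤ)) +
                ((j : ℕ) : ℤ) * (2 * (k : ℤ) + 1) + 2 * (k : ℤ) * ((L : ℤ) + (n : ℤ) + 1) -
                (k : ℤ) ^ 2) *
            (qp (q ^ 2) (q ^ 2) k * qp (q ^ 2) (q ^ 2) (k + (i : ℕ)) /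
              (qp (q ^ 2) (q ^ 2) (2 * k) * qp (q ^ 2) (q ^ 2) (i : ℕ))) *
            (qp (q ^ (-(2 * (L : ℤ)))) (q ^ 2) k *
                qp (q ^ (-(2 * ((j : ℕ) : ℤ) + 2 * (n : ℤ)))) (q ^ 2) k /
              (qp (q ^ 2) (q ^ 2) k * qp (q ^ (2 * (L : ℤ) + 4)) (q ^ 2) k)) *
            (qp (q ^ 2) (q ^ 2) (n + (j : ℕ) - k) /
              qp (q ^ (4 * (k : ℤ) + 4)) (q ^ 2) (n + (j : ℕ) - k)) *
            qRacah (q ^ 2) 1 1 (q ^ (-(2 * (n : ℤ) + 2 * ((j : ℕ) : ℤ) + 2)))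
              (q ^ (-(2 * (L : ℤ) + 2))) k (j : ℕ)) *
        (C (q ^ 2) (q ^ (-(2 * (k : ℤ)))) (k - (i : ℕ)) *
          C (q ^ 2) (q ^ (2 * (k : ℤ) + 2)) (n + (j : ℕ) - k))

/-- Evaluation of the matrix-valued polynomial `P_n` at a point. -/
def evP (q : ℂ) (L : ℕ) (C : ℂ → ℂ → ℕ → Polynomial ℂ) (n : ℕ) (x : ℂ) :
    Matrix (Fin (L + 1)) (Fin (L + 1)) ℂ :=
  (Pm q L C n).map (Polynomial.eval x)

/-- The coefficients `α_t(m,n)` of the weight. -/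
def alphaC (q : ℂ) (L m n t : ℕ) : ℂ :=
  q ^ (2 * (n : ℤ) * ((L : ℤ) + 1) - (n : ℤ) ^ 2 - (2 * (L : ℤ) + 3) * (t : ℤ) + (t : ℤ) ^ 2 -
      (L : ℤ) + (m : ℤ)) *
    ((1 - q ^ (2 * (L : ℤ) + 2)) / (1 - q ^ (2 * (m : ℤ) + 2))) *
    (qp (q ^ 2) (q ^ 2) (L - n) * qp (q ^ 2) (q ^ 2) n / qp (q ^ 2) (q ^ 2) L) *
    ((-1 : ℂ) ^ ((m : ℤ) - (t : ℤ)) * qp (q ^ (2 * (m : ℤ) - 2 * (L : ℤ))) (q ^ 2) (n - t) /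
      qp (q ^ (2 * (m : ℤ) + 4)) (q ^ 2) (n - t)) *
    (qp (q ^ (2 * (L : ℤ) + 4 - 2 * (t : ℤ))) (q ^ 2) t / qp (q ^ 2) (q ^ 2) t)

/-- The matrix weight `W(x)`. -/
def Wm (q : ℂ) (L : ℕ) (x : ℂ) : Matrix (Fin (L + 1)) (Fin (L + 1)) ℂ :=
  Matrix.of fun i j =>
    ∑ t ∈ Finset.range (max (i : ℕ) (j : ℕ) + 1),
      alphaC q L (min (i : ℕ) (j : ℕ)) (max (i : ℕ) (j : ℕ)) t *
        (Polynomial.Chebyshev.U ℂ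
            ((min (i : ℕ) (j : ℕ) : ℤ) + (max (i : ℕ) (j : ℕ) : ℤ) - 2 * (t : ℤ))).eval x

/-- The antidiagonal involution `J`. -/
def Jm (L : ℕ) : Matrix (Fin (L + 1)) (Fin (L + 1)) ℂ :=
  Matrix.of fun i j => if (i : ℕ) + (j : ℕ) = L then 1 else 0

/-- The diagonal leading-coefficient matrix `Γ_n`. -/
def Gam (q : ℂ) (L n : ℕ) : Matrix (Fin (L + 1)) (Fin (L + 1)) ℂ :=
  Matrix.diagonal fun i =>
    2 ^ n * q ^ n * qp (q ^ (2 * ((i : ℕ) : ℤ) + 2)) (q ^ 2) n *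
        qp (q ^ (2 * (L : ℤ) - 2 * ((i : ℕ) : ℤ) + 2)) (q ^ 2) n /
      (qp (q ^ 2) (q ^ 2) n * qp (q ^ (2 * (L : ℤ) + 4)) (q ^ 2) n)

/-- The squared-norm matrix `G_m`. -/
def Gmat (q : ℂ) (L m : ℕ) : Matrix (Fin (L + 1)) (Fin (L + 1)) ℂ :=
  Matrix.diagonal fun i =>
    q ^ (2 * (m : ℤ) - (L : ℤ)) * (1 - q ^ (2 * (L : ℤ) + 2)) ^ 2 /
      ((1 - q ^ (2 * (m : ℤ) + 2 * ((i : ℕ) : ℤ) + 2)) *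
        (1 - q ^ (2 * (L : ℤ) - 2 * ((i : ℕ) : ℤ) + 2 * (m : ℤ) + 2)))

/-- The unipotent lower triangular matrix `L(x)` of the LDU decomposition. -/
def Lm (q : ℂ) (L : ℕ) (C : ℂ → ℂ → ℕ → Polynomial ℂ) (x : ℂ) :
    Matrix (Fin (L + 1)) (Fin (L + 1)) ℂ :=
  Matrix.of fun m k =>
    if (k : ℕ) ≤ (m : ℕ) then
      q ^ (((m : ℕ) : ℤ) - ((k : ℕ) : ℤ)) * qp (q ^ 2) (q ^ 2) (m : ℕ) *
          qp (q ^ 2) (q ^ 2) (2 * (k : ℕ) + 1) /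
          (qp (q ^ 2) (q ^ 2) ((m : ℕ) + (k : ℕ) + 1) * qp (q ^ 2) (q ^ 2) (k : ℕ)) *
        (C (q ^ 2) (q ^ (2 * (k : ℕ) + 2)) ((m : ℕ) - (k : ℕ))).eval x
    else 0

/-- The claimed inverse of `L(x)`. -/
def Linv (q : ℂ) (L : ℕ) (C : ℂ → ℂ → ℕ → Polynomial ℂ) (x : ℂ) :
    Matrix (Fin (L + 1)) (Fin (L + 1)) ℂ :=
  Matrix.of fun k n =>
    if (n : ℕ) ≤ (k : ℕ) then
      q ^ ((2 * ((k : ℕ) : ℤ) + 1) * (((k : ℕ) : ℤ) - ((n : ℕ) : ℤ))) *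
          qp (q ^ 2) (q ^ 2) (k : ℕ) * qp (q ^ 2) (q ^ 2) ((k : ℕ) + (n : ℕ)) /
          (qp (q ^ 2) (q ^ 2) (2 * (k : ℕ)) * qp (q ^ 2) (q ^ 2) (n : ℕ)) *
        (C (q ^ 2) (q ^ (-(2 * ((k : ℕ) : ℤ)))) ((k : ℕ) - (n : ℕ))).eval x
    else 0

/-- The constants `c_k(ℓ)`. -/
def ckC (q : ℂ) (L k : ℕ) : ℂ :=
  q ^ (-(L : ℤ)) / 4 * (1 - q ^ (4 * k + 2)) * qp (q ^ 2) (q ^ 2) (L + k + 1) *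
      qp (q ^ 2) (q ^ 2) (L - k) * qp (q ^ 2) (q ^ 2) k ^ 4 /
    (qp (q ^ 2) (q ^ 2) (2 * k + 1) ^ 2 * qp (q ^ 2) (q ^ 2) L ^ 2)

/-- The diagonal part `T(x)` of the LDU decomposition. -/
def Tm (q : ℂ) (L : ℕ) (x : ℂ) : Matrix (Fin (L + 1)) (Fin (L + 1)) ℂ :=
  Matrix.diagonal fun k =>
    ckC q L (k : ℕ) *
      (4 * ∏ j ∈ Finset.Icc 1 (k : ℕ), (1 - 2 * (2 * x ^ 2 - 1) * q ^ (2 * j) + q ^ (4 * j)))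

/-- The coefficient matrix `M₁(z)` of the q-difference operator `D₁`. -/
def M1f (q : ℂ) (L : ℕ) (z : ℂ) : Matrix (Fin (L + 1)) (Fin (L + 1)) ℂ :=
  Matrix.of fun i j =>
    if (j : ℕ) = (i : ℕ) + 1 then
      -(q ^ (1 - ((i : ℕ) : ℤ)) * (1 - q ^ (2 * (i : ℕ) + 2)) / (1 - q ^ 2) ^ 2 *
        (z / (1 - z ^ 2)))
    else if (j : ℕ) = (i : ℕ) then
      q ^ (1 - ((i : ℕ) : ℤ)) / (1 - q ^ 2) ^ 2 *
        ((1 - q ^ (2 * (i : ℕ) + 2) * z ^ 2) / (1 - z ^ 2))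
    else 0

/-- `M₂(z) = J M₁(z) J`. -/
def M2f (q : ℂ) (L : ℕ) (z : ℂ) : Matrix (Fin (L + 1)) (Fin (L + 1)) ℂ :=
  Jm L * M1f q L z * Jm L

/-- The eigenvalue matrix `Λ_n(1)`. -/
def Lam1 (q : ℂ) (L n : ℕ) : Matrix (Fin (L + 1)) (Fin (L + 1)) ℂ :=
  Matrix.diagonal fun j =>
    (q ^ (-((j : ℕ) : ℤ) - (n : ℤ) - 1) + q ^ (((j : ℕ) : ℤ) + (n : ℤ) + 1)) / (q⁻¹ - q) ^ 2

/-- The eigenvalue matrix `Λ_n(2) = J Λ_n(1) J`. -/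
def Lam2 (q : ℂ) (L n : ℕ) : Matrix (Fin (L + 1)) (Fin (L + 1)) ℂ :=
  Jm L * Lam1 q L n * Jm L

/-- The diagonal coefficient matrix `K₁(z)` of the decoupled operator. -/
def K1f (q : ℂ) (L : ℕ) (z : ℂ) : Matrix (Fin (L + 1)) (Fin (L + 1)) ℂ :=
  Matrix.diagonal fun i =>
    q ^ (1 - ((i : ℕ) : ℤ)) / (1 - q ^ 2) ^ 2 *
      ((1 - q ^ (2 * (i : ℕ) + 2) * z ^ 2) / (1 - z ^ 2))

/-- The symmetric Laurent polynomial `Ĉ_k(z;β|p)`. -/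
def Chat (p β : ℂ) (k : ℕ) (z : ℂ) : ℂ :=
  ∑ r ∈ Finset.range (k + 1),
    qp β p r * qp β p (k - r) / (qp p p r * qp p p (k - r)) * z ^ ((k : ℤ) - 2 * (r : ℤ))

/-- The matrix polynomials `R_n(x) = L(x)ᵀ P_n(x) Γ_n⁻¹`. -/
def Rmat (q : ℂ) (L : ℕ) (C : ℂ → ℂ → ℕ → Polynomial ℂ) (n : ℕ) (x : ℂ) :
    Matrix (Fin (L + 1)) (Fin (L + 1)) ℂ :=
  (Lm q L C x)ᵀ * evP q L C n x * (Gam q L n)⁻¹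

/-
The matrix `L(x)ᵀ P_n(x)` has as `(k, j)`-entry a multiple of the scalar polynomial
`C_{n+j-k}(x; q^{2k+2} | q²)`, and `L(x)⁻¹` has explicit entries too. Its columns turn the scalar
q-difference equations into a coupled one for column `j` of `P_n`: with `x = (z + z⁻¹) / 2`, row `i`
involves only the entries `i` and `i + 1`, and the latter with an extra factor `z`. Comparing
extreme Laurent coefficients, descending from the diagonal, kills every coefficient of degree at
least `n + i - j + 1` in the `(i, j)`-entry, `i ≤ j`, except where the eigenvalues agree: at the
coefficient of degree `n + j - i`. That coefficient is a sum over the q-Racah lattice pairing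
`R(·; j)` with a basis function of degree `i`. Since the second-order q-Racah operator is symmetric
for the weight and bidiagonal in this basis, the pairing satisfies a first-order recursion in `i`;
it vanishes for `i < j`, and at `i = j` it follows from the extreme case, where one lattice point
survives and the q-Saalschütz sum evaluates `R`. This value is the diagonal entry of `Γ_n`.
-/

section QPochhammer

variable {p : ℂ}

lemma one_sub_pow_ne_zero (hP : ¬IsOfFinOrder p) {k : ℕ} (hk : 0 < k) : 1 - p ^ k ≠ 0 :=
  sub_ne_zero.2 fun h => hP (isOfFinOrder_iff_pow_eq_one.2 ⟨k, hk, h.symm⟩)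

lemma one_add_pow_ne_zero (hP : ¬IsOfFinOrder p) (k : ℕ) : 1 + p ^ k ≠ 0 := by
  rcases Nat.eq_zero_or_pos k with rfl | hk
  · norm_num
  · intro h
    have hsq : 1 - p ^ (k + k) = 0 := by rw [pow_add]; linear_combination (1 - p ^ k) * h
    exact one_sub_pow_ne_zero hP (by omega) hsq

lemma one_sub_inv_pow_mul_pow_ne_zero (hp : p ≠ 0) (hP : ¬IsOfFinOrder p) {m k : ℕ} (h : k < m) :
    1 - (p ^ m)⁻¹ * p ^ k ≠ 0 := by
  obtain ⟨d, rfl⟩ := Nat.exists_eq_add_of_lt h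
  have hne := one_sub_pow_ne_zero hP (k := d + 1) d.succ_pos
  have : 1 - (p ^ (k + d + 1))⁻¹ * p ^ k = -(p ^ (d + 1))⁻¹ * (1 - p ^ (d + 1)) := by
    field_simp
    ring
  rw [this]
  exact mul_ne_zero (neg_ne_zero.2 (inv_ne_zero (pow_ne_zero _ hp))) hne

lemma qp_zero (a p : ℂ) : qp a p 0 = 1 := by simp [qp]

lemma qp_succ (a p : ℂ) (n : ℕ) : qp a p (n + 1) = qp a p n * (1 - a * p ^ n) := by
  simp [qp, Finset.prod_range_succ]

lemma qp_succ' (a p : ℂ) (n : ℕ) : qp a p (n + 1) = (1 - a) * qp (a * p) p n := by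
  simp only [qp, Finset.prod_range_succ', pow_succ', pow_zero, mul_one, mul_assoc, mul_comm]

lemma qp_add (a p : ℂ) (m n : ℕ) : qp a p (m + n) = qp a p m * qp (a * p ^ m) p n := by
  simp only [qp, Finset.prod_range_add, pow_add, mul_assoc]

lemma qp_self_succ (p : ℂ) (n : ℕ) : qp p p (n + 1) = qp p p n * (1 - p ^ (n + 1)) := by
  rw [qp_succ, ← pow_succ']

lemma qp_self_add (p : ℂ) (m n : ℕ) : qp p p (m + n) = qp p p m * qp (p ^ (m + 1)) p n := by
  rw [qp_add, ← pow_succ']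

lemma qp_pow_ne_zero (hP : ¬IsOfFinOrder p) (a n : ℕ) : qp (p ^ (a + 1)) p n ≠ 0 :=
  Finset.prod_ne_zero_iff.2 fun i _ => by
    rw [← pow_add]; exact one_sub_pow_ne_zero hP (by omega)

lemma qp_self_ne_zero (hP : ¬IsOfFinOrder p) (n : ℕ) : qp p p n ≠ 0 := by
  simpa using qp_pow_ne_zero hP 0 n

lemma qp_inv_pow_eq_zero (hp : p ≠ 0) {m k : ℕ} (h : m < k) : qp (p ^ m)⁻¹ p k = 0 :=
  Finset.prod_eq_zero (Finset.mem_range.2 h) (by rw [inv_mul_cancel₀ (pow_ne_zero m hp), sub_self])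

lemma qp_inv_pow_ne_zero (hp : p ≠ 0) (hP : ¬IsOfFinOrder p) {m k : ℕ} (h : k ≤ m) :
    qp (p ^ m)⁻¹ p k ≠ 0 :=
  Finset.prod_ne_zero_iff.2 fun _ hi =>
    one_sub_inv_pow_mul_pow_ne_zero hp hP ((Finset.mem_range.1 hi).trans_le h)

lemma qp_inv_pow_mul (hp : p ≠ 0) (d e : ℕ) :
    qp (p ^ (d + e))⁻¹ p d * p ^ ((d + 1).choose 2 + d * e) * qp p p e =
      (-1) ^ d * qp p p (d + e) := by
  induction d with
  | zero => simp [qp_zero]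
  | succ d ih =>
    have hshift : (p ^ (d + 1 + e))⁻¹ * p = (p ^ (d + e))⁻¹ := by
      rw [show d + 1 + e = d + e + 1 by ring, pow_succ]; field_simp
    have hfactor : (1 - (p ^ (d + 1 + e))⁻¹) * p ^ (d + 1 + e) = -(1 - p ^ (d + 1 + e)) := by
      rw [sub_mul, inv_mul_cancel₀ (pow_ne_zero _ hp)]; ring
    rw [qp_succ', hshift, show d + 1 + e = d + e + 1 by ring, qp_self_succ,
      Nat.choose_succ_succ' (d + 1), Nat.choose_one_right,
      show d + 1 + (d + 1).choose 2 + (d + 1) * e = (d + 1).choose 2 + d * e + (d + 1 + e) by ring,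
      pow_add]
    rw [show d + 1 + e = d + e + 1 by ring] at hfactor ⊢
    linear_combination (1 - (p ^ (d + e + 1))⁻¹) * p ^ (d + e + 1) * ih +
      (-1) ^ d * qp p p (d + e) * hfactor

end QPochhammer

section QRacah

variable {p : ℂ}

/-- The basis functions `(X⁻¹;p)_m (gXp;p)_m` in which q-Racah polynomials are expanded; the lattice
points are `X = p^x`. -/
def racahBasis (p g X : ℂ) (m : ℕ) : ℂ := qp X⁻¹ p m * qp (g * X * p) p m

lemma racahBasis_zero (p g X : ℂ) : racahBasis p g X 0 = 1 := by simp [racahBasis, qp_zero]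

lemma racahBasis_succ (p g X : ℂ) (m : ℕ) :
    racahBasis p g X (m + 1) =
      racahBasis p g X m * ((1 - X⁻¹ * p ^ m) * (1 - g * X * p * p ^ m)) := by
  simp only [racahBasis, qp_succ]; ring

lemma racahBasis_pow_eq_zero (hp : p ≠ 0) (g : ℂ) {j m : ℕ} (h : j < m) :
    racahBasis p g (p ^ j) m = 0 := by
  rw [racahBasis, qp_inv_pow_eq_zero hp h, zero_mul]

lemma racahBasis_mul_base (hp : p ≠ 0) {X : ℂ} (hX : X ≠ 0) (g : ℂ) (m : ℕ) :
    (1 - g * X * p) * racahBasis p g (X * p) (m + 1) =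
      racahBasis p g X m *
        ((1 - X⁻¹ * p⁻¹) * (1 - g * X * p * p ^ m) * (1 - g * X * p * p ^ (m + 1))) := by
  have hinv : (X * p)⁻¹ * p = X⁻¹ := by field_simp
  have hshift : (1 - g * X * p) * qp (g * X * p * p) p (m + 1) =
      qp (g * X * p) p m * (1 - g * X * p * p ^ m) * (1 - g * X * p * p ^ (m + 1)) := by
    rw [← qp_succ', qp_succ, qp_succ]
  rw [racahBasis, racahBasis, qp_succ' (X * p)⁻¹, hinv, ← mul_assoc g, mul_inv]
  linear_combination (1 - X⁻¹ * p⁻¹) * qp X⁻¹ p m * hshift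

lemma racahBasis_div_base (hp : p ≠ 0) (g X : ℂ) (m : ℕ) :
    (1 - X⁻¹) * racahBasis p g (X * p⁻¹) (m + 1) =
      racahBasis p g X m *
        ((1 - g * X) * (1 - X⁻¹ * p ^ m) * (1 - X⁻¹ * p ^ (m + 1))) := by
  have hinv : (X * p⁻¹)⁻¹ = X⁻¹ * p := by rw [mul_inv, inv_inv]
  have hshift : (1 - X⁻¹) * qp (X⁻¹ * p) p (m + 1) =
      qp X⁻¹ p m * (1 - X⁻¹ * p ^ m) * (1 - X⁻¹ * p ^ (m + 1)) := by
    rw [← qp_succ', qp_succ, qp_succ]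
  rw [racahBasis, racahBasis, hinv, qp_succ' (g * (X * p⁻¹) * p),
    show g * (X * p⁻¹) * p = g * X by field_simp]
  linear_combination (1 - g * X) * qp (g * X * p) p m * hshift

/-- The coefficient `p^m / ((p;p)_m² (c;p)_m (d;p)_m)` of the q-Racah expansion. -/
def racahCoeff (p c d : ℂ) (m : ℕ) : ℂ := p ^ m / (qp p p m ^ 2 * qp c p m * qp d p m)

/-- The q-Racah function `R_j` with `α = β = 1`, `γp = d`, `δp = c`, dual variable `j` and lattice
variable `X`. -/
def racahFun (p c d : ℂ) (j : ℕ) (X : ℂ) : ℂ :=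
  ∑ m ∈ range (j + 1),
    racahCoeff p c d m * racahBasis p (c * d / p ^ 2) (p ^ j) m * racahBasis p 1 X m

/-- The upward coefficient of `racahOp`. -/
def racahUp (p c d X : ℂ) : ℂ :=
  (1 - X * p) * (1 - c * X) * (1 - d * X) / ((1 + X * p) * (1 - X ^ 2 * p))

/-- The downward coefficient of `racahOp`. -/
def racahDown (p c d X : ℂ) : ℂ :=
  p⁻¹ * (1 - X) * (d - X * p) * (c - X * p) / ((1 + X) * (1 - X ^ 2 * p))

/-- The second-order q-difference operator diagonalised by the q-Racah functions `racahFun`. -/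
def racahOp (p c d : ℂ) (f : ℂ → ℂ) (X : ℂ) : ℂ :=
  racahUp p c d X * (f (X * p) - f X) - racahDown p c d X * (f X - f (X * p⁻¹))

/-- The eigenvalue of `racahOp` on `racahFun p c d j`. -/
def racahEigenvalue (p c d : ℂ) (j : ℕ) : ℂ := -(1 - (p ^ j)⁻¹) * (1 - c * d * p ^ j * p⁻¹)

/-- The off-diagonal entry of `racahOp`, which is bidiagonal in the basis `racahBasis p 1 · m`. -/
def racahLowering (p c d : ℂ) (m : ℕ) : ℂ :=
  -(1 - p ^ (m + 1)) ^ 2 * (p ^ (m + 1))⁻¹ * (1 - c * p ^ m) * (1 - d * p ^ m)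

lemma racahOp_racahBasis_zero (p c d X : ℂ) :
    racahOp p c d (fun Y => racahBasis p 1 Y 0) X = 0 := by
  simp [racahOp, racahBasis_zero]

lemma racahOp_racahBasis_succ (hp : p ≠ 0) {X : ℂ} (hX : X ≠ 0) (h₁ : 1 + X ≠ 0)
    (h₂ : 1 + X * p ≠ 0) (h₃ : 1 - X ^ 2 * p ≠ 0) (c d : ℂ) (m : ℕ) :
    racahOp p c d (fun Y => racahBasis p 1 Y (m + 1)) X =
      racahEigenvalue p c d (m + 1) * racahBasis p 1 X (m + 1) +
        racahLowering p c d m * racahBasis p 1 X m := by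
  have hup := racahBasis_mul_base hp hX 1 m
  have hdown := racahBasis_div_base hp 1 X m
  have hdown' : (1 - X) * racahBasis p 1 (X * p⁻¹) (m + 1) =
      -X * (racahBasis p 1 X m *
        ((1 - 1 * X) * (1 - X⁻¹ * p ^ m) * (1 - X⁻¹ * p ^ (m + 1)))) := by
    rw [← hdown]; field_simp; ring
  rw [one_mul] at hup hdown'
  have hup_term : racahUp p c d X * racahBasis p 1 (X * p) (m + 1) =
      (1 - c * X) * (1 - d * X) / ((1 + X * p) * (1 - X ^ 2 * p)) *
        ((1 - X * p) * racahBasis p 1 (X * p) (m + 1)) := by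
    rw [racahUp]; ring
  have hdown_term : racahDown p c d X * racahBasis p 1 (X * p⁻¹) (m + 1) =
      p⁻¹ * (d - X * p) * (c - X * p) / ((1 + X) * (1 - X ^ 2 * p)) *
        ((1 - X) * racahBasis p 1 (X * p⁻¹) (m + 1)) := by
    rw [racahDown]; ring
  rw [racahOp, mul_sub, mul_sub, hup_term, hdown_term, hup, hdown', racahBasis_succ, racahUp,
    racahDown, racahEigenvalue, racahLowering]
  have hpm : p ^ m ≠ 0 := pow_ne_zero m hp
  simp only [pow_succ p m]
  field_simp
  ring

lemma racahOp_sum (p c d : ℂ) (s : Finset ℕ) (a : ℕ → ℂ) (f : ℕ → ℂ → ℂ) (X : ℂ) :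
    racahOp p c d (fun Y => ∑ m ∈ s, a m * f m Y) X = ∑ m ∈ s, a m * racahOp p c d (f m) X := by
  simp only [racahOp, ← Finset.sum_sub_distrib, Finset.mul_sum]
  exact Finset.sum_congr rfl fun _ _ => by ring

lemma racahEigenvalue_sub (hp : p ≠ 0) (c d : ℂ) (j m : ℕ) :
    racahEigenvalue p c d j - racahEigenvalue p c d m =
      -(p ^ m)⁻¹ * ((1 - (p ^ j)⁻¹ * p ^ m) * (1 - c * d / p ^ 2 * p ^ j * p * p ^ m)) := by
  rw [racahEigenvalue, racahEigenvalue]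
  have hpm : p ^ m ≠ 0 := pow_ne_zero m hp
  have hpj : p ^ j ≠ 0 := pow_ne_zero j hp
  field_simp
  ring

lemma racahCoeff_succ_mul_racahLowering (hp : p ≠ 0) {c d : ℂ} {m : ℕ} (h₁ : qp p p (m + 1) ≠ 0)
    (h₂ : qp c p (m + 1) ≠ 0) (h₃ : qp d p (m + 1) ≠ 0) :
    racahCoeff p c d (m + 1) * racahLowering p c d m = -(p ^ m)⁻¹ * racahCoeff p c d m := by
  rw [qp_succ] at h₂ h₃
  rw [qp_self_succ] at h₁
  have hpm : p ^ m ≠ 0 := pow_ne_zero m hp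
  rw [racahCoeff, racahCoeff, racahLowering, qp_self_succ, qp_succ, qp_succ]
  obtain ⟨h₁, h₁'⟩ := mul_ne_zero_iff.1 h₁
  obtain ⟨h₂, h₂'⟩ := mul_ne_zero_iff.1 h₂
  obtain ⟨h₃, h₃'⟩ := mul_ne_zero_iff.1 h₃
  rw [mul_comm d] at h₃'
  field_simp

lemma racahOp_racahFun (hp : p ≠ 0) {X : ℂ} (hX : X ≠ 0) (h₁ : 1 + X ≠ 0)
    (h₂ : 1 + X * p ≠ 0) (h₃ : 1 - X ^ 2 * p ≠ 0) {c d : ℂ} {j : ℕ}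
    (hpj : ∀ m ≤ j, qp p p m ≠ 0) (hc : ∀ m ≤ j, qp c p m ≠ 0) (hd : ∀ m ≤ j, qp d p m ≠ 0) :
    racahOp p c d (racahFun p c d j) X = racahEigenvalue p c d j * racahFun p c d j X := by
  set b : ℕ → ℂ := fun m => racahCoeff p c d m * racahBasis p (c * d / p ^ 2) (p ^ j) m with hb
  have hcoeff : ∀ m < j, b (m + 1) * racahLowering p c d m =
      (racahEigenvalue p c d j - racahEigenvalue p c d m) * b m := by
    intro m hm
    have := racahCoeff_succ_mul_racahLowering hp (hpj _ hm) (hc _ hm) (hd _ hm)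
    simp only [hb, racahBasis_succ, racahEigenvalue_sub hp c d j m]
    linear_combination racahBasis p (c * d / p ^ 2) (p ^ j) m *
      ((1 - (p ^ j)⁻¹ * p ^ m) * (1 - c * d / p ^ 2 * p ^ j * p * p ^ m)) * this
  have hexpand : racahOp p c d (racahFun p c d j) X =
      ∑ m ∈ range (j + 1), b m * racahOp p c d (fun Y => racahBasis p 1 Y m) X :=
    racahOp_sum p c d _ b (fun m Y => racahBasis p 1 Y m) X
  have hzero : racahEigenvalue p c d 0 = 0 := by simp [racahEigenvalue]
  calc racahOp p c d (racahFun p c d j) X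
      = ∑ m ∈ range (j + 1), racahEigenvalue p c d m * (b m * racahBasis p 1 X m) +
          ∑ m ∈ range j, b (m + 1) * racahLowering p c d m * racahBasis p 1 X m := by
        rw [hexpand, sum_range_succ', racahOp_racahBasis_zero, mul_zero, add_zero,
          sum_range_succ' _ j, hzero, zero_mul, add_zero, ← sum_add_distrib]
        refine sum_congr rfl fun m _ => ?_
        rw [racahOp_racahBasis_succ hp hX h₁ h₂ h₃]
        ring
    _ = ∑ m ∈ range (j + 1), racahEigenvalue p c d m * (b m * racahBasis p 1 X m) +
          ∑ m ∈ range (j + 1),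
            (racahEigenvalue p c d j - racahEigenvalue p c d m) * (b m * racahBasis p 1 X m) := by
        rw [sum_range_succ (fun m => (racahEigenvalue p c d j - _) * _), sub_self, zero_mul,
          add_zero]
        congr 1
        exact sum_congr rfl fun m hm => by rw [hcoeff m (mem_range.1 hm), mul_assoc]
    _ = racahEigenvalue p c d j * racahFun p c d j X := by
        rw [← sum_add_distrib, racahFun, mul_sum]
        exact sum_congr rfl fun m _ => by simp only [hb]; ring

end QRacah

section RacahPairing

variable {p : ℂ}

/-- The orthogonality weight of the q-Racah polynomials with `c = p^(-L)`, `d = p^(-N)` on the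
lattice points `p^k`, `k ≤ min L N`, up to a factor independent of `k`. -/
def racahWeight (p : ℂ) (L N k : ℕ) : ℂ :=
  p ^ k ^ 2 * (1 - p ^ (2 * k + 1)) /
    (qp p p (L - k) * qp p p (N - k) * qp p p (L + k + 1) * qp p p (N + k + 1))

lemma racahWeight_succ_mul_racahDown (hp : p ≠ 0) (hP : ¬IsOfFinOrder p) {L N k : ℕ}
    (hL : k < L) (hN : k < N) :
    racahWeight p L N (k + 1) * racahDown p (p ^ L)⁻¹ (p ^ N)⁻¹ (p ^ (k + 1)) =
      racahWeight p L N k * racahUp p (p ^ L)⁻¹ (p ^ N)⁻¹ (p ^ k) := by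
  obtain ⟨a, rfl⟩ := Nat.exists_eq_add_of_lt hL
  obtain ⟨b, rfl⟩ := Nat.exists_eq_add_of_lt hN
  have h₁ := one_add_pow_ne_zero hP (k + 1)
  have h₂ := one_sub_pow_ne_zero hP (k := 2 * k + 1) (by omega)
  have h₃ := one_sub_pow_ne_zero hP (k := 2 * k + 3) (by omega)
  have ha := one_sub_pow_ne_zero hP (k := a + 1) (by omega)
  have hb := one_sub_pow_ne_zero hP (k := b + 1) (by omega)
  have ha' := one_sub_pow_ne_zero hP (k := k + a + 1 + (k + 1) + 1) (by omega)
  have hb' := one_sub_pow_ne_zero hP (k := k + b + 1 + (k + 1) + 1) (by omega)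
  have hua : (1 - (p ^ (k + a + 1))⁻¹ * p ^ k) = -(p ^ (a + 1))⁻¹ * (1 - p ^ (a + 1)) := by
    field_simp; ring
  have hub : (1 - (p ^ (k + b + 1))⁻¹ * p ^ k) = -(p ^ (b + 1))⁻¹ * (1 - p ^ (b + 1)) := by
    field_simp; ring
  have hda : ((p ^ (k + a + 1))⁻¹ - p ^ (k + 1) * p) =
      (p ^ (k + a + 1))⁻¹ * (1 - p ^ (k + a + 1 + (k + 1) + 1)) := by
    field_simp; ring
  have hdb : ((p ^ (k + b + 1))⁻¹ - p ^ (k + 1) * p) =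
      (p ^ (k + b + 1))⁻¹ * (1 - p ^ (k + b + 1 + (k + 1) + 1)) := by
    field_simp; ring
  rw [racahDown, racahUp, hua, hub, hda, hdb, racahWeight, racahWeight,
    show k + a + 1 - k = a + 1 by omega, show k + b + 1 - k = b + 1 by omega,
    show k + a + 1 - (k + 1) = a by omega, show k + b + 1 - (k + 1) = b by omega,
    show (p ^ (k + 1)) ^ 2 * p = p ^ (2 * k + 3) by ring,
    show (p ^ k) ^ 2 * p = p ^ (2 * k + 1) by ring, show 2 * (k + 1) + 1 = 2 * k + 3 by ring,
    ← pow_succ p k, ← add_assoc (k + a + 1), ← add_assoc (k + b + 1), qp_self_succ p a,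
    qp_self_succ p b, qp_self_succ p (k + a + 1 + k + 1), qp_self_succ p (k + b + 1 + k + 1)]
  rw [← add_assoc] at ha' hb'
  have hqa := qp_self_ne_zero hP a
  have hqb := qp_self_ne_zero hP b
  have hqa' := qp_self_ne_zero hP (k + a + 1 + k + 1)
  have hqb' := qp_self_ne_zero hP (k + b + 1 + k + 1)
  field_simp
  ring

lemma sum_racahWeight_mul_casorati (hp : p ≠ 0) (hP : ¬IsOfFinOrder p) {L N K : ℕ}
    (hL : K ≤ L) (hN : K ≤ N) (f h : ℂ → ℂ) :
    ∑ k ∈ range (K + 1), racahWeight p L N k *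
        (h (p ^ k) * racahOp p (p ^ L)⁻¹ (p ^ N)⁻¹ f (p ^ k) -
          f (p ^ k) * racahOp p (p ^ L)⁻¹ (p ^ N)⁻¹ h (p ^ k)) =
      racahWeight p L N K * racahUp p (p ^ L)⁻¹ (p ^ N)⁻¹ (p ^ K) *
        (h (p ^ K) * f (p ^ (K + 1)) - f (p ^ K) * h (p ^ (K + 1))) := by
  induction K with
  | zero =>
    simp only [zero_add, sum_range_one, racahOp, racahDown, pow_zero, pow_one, one_mul, sub_self]
    ring
  | succ K ih =>
    have hback : p ^ (K + 1) * p⁻¹ = p ^ K := by rw [pow_succ]; field_simp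
    rw [sum_range_succ, ih (by omega) (by omega), ← racahWeight_succ_mul_racahDown hp hP hL hN]
    simp only [racahOp, hback, ← pow_succ p (K + 1)]
    ring

lemma racahOp_symmetric (hp : p ≠ 0) (hP : ¬IsOfFinOrder p) (L N : ℕ) (f h : ℂ → ℂ) :
    ∑ k ∈ range (min L N + 1),
        racahWeight p L N k * (h (p ^ k) * racahOp p (p ^ L)⁻¹ (p ^ N)⁻¹ f (p ^ k)) =
      ∑ k ∈ range (min L N + 1),
        racahWeight p L N k * (f (p ^ k) * racahOp p (p ^ L)⁻¹ (p ^ N)⁻¹ h (p ^ k)) := by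
  have hend : racahUp p (p ^ L)⁻¹ (p ^ N)⁻¹ (p ^ min L N) = 0 := by
    rcases min_choice L N with h | h <;>
      rw [h, racahUp, inv_mul_cancel₀ (pow_ne_zero _ hp)] <;> simp
  have hcas := sum_racahWeight_mul_casorati hp hP (min_le_left L N) (min_le_right L N) f h
  rw [hend, mul_zero, zero_mul] at hcas
  rw [← sub_eq_zero, ← hcas, ← sum_sub_distrib]
  exact sum_congr rfl fun _ _ => by ring

/-- The q-Racah moment `∑_k w_k φ_i(p^k) R_j(p^k)` of the basis function `φ_i` against `R_j`. -/
def racahPairing (p : ℂ) (L N i j : ℕ) : ℂ :=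
  ∑ k ∈ range (min L N + 1),
    racahWeight p L N k * (racahBasis p 1 (p ^ k) i * racahFun p (p ^ L)⁻¹ (p ^ N)⁻¹ j (p ^ k))

lemma racahPairing_comm (p : ℂ) (L N i j : ℕ) :
    racahPairing p L N i j = racahPairing p N L i j := by
  have hweight : ∀ k, racahWeight p L N k = racahWeight p N L k := fun k => by
    simp only [racahWeight, mul_comm, mul_left_comm]
  have hfun : ∀ X, racahFun p (p ^ L)⁻¹ (p ^ N)⁻¹ j X = racahFun p (p ^ N)⁻¹ (p ^ L)⁻¹ j X :=
    fun X => by simp only [racahFun, racahCoeff, mul_comm, mul_left_comm]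
  simp only [racahPairing, min_comm L N, hweight, hfun]

lemma one_sub_pow_sq_mul_ne_zero (hP : ¬IsOfFinOrder p) (k : ℕ) : 1 - (p ^ k) ^ 2 * p ≠ 0 := by
  rw [← pow_mul, ← pow_succ]
  exact one_sub_pow_ne_zero hP (by omega)

lemma racahPairing_succ (hp : p ≠ 0) (hP : ¬IsOfFinOrder p) {L N j : ℕ} (hL : j ≤ L) (hN : j ≤ N)
    (i : ℕ) :
    (racahEigenvalue p (p ^ L)⁻¹ (p ^ N)⁻¹ j - racahEigenvalue p (p ^ L)⁻¹ (p ^ N)⁻¹ (i + 1)) *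
        racahPairing p L N (i + 1) j =
      racahLowering p (p ^ L)⁻¹ (p ^ N)⁻¹ i * racahPairing p L N i j := by
  have hsym := racahOp_symmetric hp hP L N (racahFun p (p ^ L)⁻¹ (p ^ N)⁻¹ j)
    fun X => racahBasis p 1 X (i + 1)
  rw [← sub_eq_zero, ← sum_sub_distrib] at hsym
  rw [← sub_eq_zero, ← hsym, racahPairing, racahPairing, mul_sum, mul_sum, ← sum_sub_distrib]
  refine sum_congr rfl fun k _ => ?_
  have h₁ := one_add_pow_ne_zero hP k
  have h₂ : 1 + p ^ k * p ≠ 0 := by rw [← pow_succ]; exact one_add_pow_ne_zero hP _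
  have h₃ := one_sub_pow_sq_mul_ne_zero hP k
  rw [racahOp_racahBasis_succ hp (pow_ne_zero k hp) h₁ h₂ h₃,
    racahOp_racahFun hp (pow_ne_zero k hp) h₁ h₂ h₃ (fun m _ => qp_self_ne_zero hP m)
      (fun m hm => qp_inv_pow_ne_zero hp hP (hm.trans hL))
      (fun m hm => qp_inv_pow_ne_zero hp hP (hm.trans hN))]
  ring

lemma racahLowering_ne_zero (hp : p ≠ 0) (hP : ¬IsOfFinOrder p) {L N i : ℕ} (hL : i < L)
    (hN : i < N) : racahLowering p (p ^ L)⁻¹ (p ^ N)⁻¹ i ≠ 0 := by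
  simp [racahLowering, one_sub_pow_ne_zero hP i.succ_pos, hp,
    one_sub_inv_pow_mul_pow_ne_zero hp hP hL, one_sub_inv_pow_mul_pow_ne_zero hp hP hN]

theorem racahPairing_eq_zero (hp : p ≠ 0) (hP : ¬IsOfFinOrder p) {L N i j : ℕ} (hL : j ≤ L)
    (hN : j ≤ N) (hij : i < j) : racahPairing p L N i j = 0 := by
  have hstep : ∀ m < j,
      (racahEigenvalue p (p ^ L)⁻¹ (p ^ N)⁻¹ j - racahEigenvalue p (p ^ L)⁻¹ (p ^ N)⁻¹ (m + 1)) *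
        racahPairing p L N (m + 1) j = 0 → racahPairing p L N m j = 0 := by
    intro m hm hzero
    rw [racahPairing_succ hp hP hL hN] at hzero
    exact (mul_eq_zero.1 hzero).resolve_left
      (racahLowering_ne_zero hp hP (hm.trans_le hL) (hm.trans_le hN))
  obtain ⟨d, rfl⟩ := Nat.exists_eq_add_of_lt hij
  induction d generalizing i with
  | zero => exact hstep i (by omega) (by rw [add_zero, sub_self, zero_mul])
  | succ d ih =>
    have hnext : racahPairing p L N (i + 1) (i + 1 + d + 1) = 0 :=
      ih (i := i + 1) (by omega) (by omega) (by omega)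
        (by rwa [show i + 1 + d + 1 = i + (d + 1) + 1 by omega])
    refine hstep i (by omega) ?_
    rw [show i + (d + 1) + 1 = i + 1 + d + 1 by omega, hnext, mul_zero]

end RacahPairing

section QSaalschutz

variable {p : ℂ}

/-- The terminating balanced series `₃φ₂(X⁻¹, gXp, b; e, f; p, p)`, truncated after `n` terms. -/
def saalschutzSum (p g b e f X : ℂ) (n : ℕ) : ℂ :=
  ∑ m ∈ range n, p ^ m * qp b p m / (qp p p m * qp e p m * qp f p m) * racahBasis p g X m

lemma racahBasis_succ_eq_mul_qp (p g X : ℂ) (n : ℕ) :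
    racahBasis p g X (n + 1) =
      qp X⁻¹ p n * (1 - X⁻¹ * p ^ n) * ((1 - g * X * p) * qp (g * X * p ^ 2) p n) := by
  rw [racahBasis, qp_succ, qp_succ', show g * X * p * p = g * X * p ^ 2 by ring]

lemma racahBasis_mul_base_succ_eq_mul_qp (hp : p ≠ 0) {X : ℂ} (hX : X ≠ 0) (g : ℂ) (n : ℕ) :
    racahBasis p g (X * p) (n + 1) =
      (1 - (X * p)⁻¹) * qp X⁻¹ p n *
        (qp (g * X * p ^ 2) p n * (1 - g * X * p ^ 2 * p ^ n)) := by
  have hinv : (X * p)⁻¹ * p = X⁻¹ := by field_simp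
  rw [racahBasis, qp_succ', hinv, qp_succ, show g * (X * p) * p = g * X * p ^ 2 by ring]

-- Telescoping behind the q-Saalschütz sum: in `X ↦ Xp` the summand satisfies a first-order
-- recurrence up to a difference in `m`, whose boundary term is the right-hand side.
lemma saalschutzSum_mul_base_sub (hp : p ≠ 0) {g b e f X : ℂ} (hX : X ≠ 0) (hb : b ≠ 0)
    (hbal : e * f = g * b * p ^ 2) (n : ℕ) (hpn : ∀ m ≤ n, qp p p m ≠ 0)
    (he : ∀ m ≤ n, qp e p m ≠ 0) (hf : ∀ m ≤ n, qp f p m ≠ 0) :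
    (1 - e * X) * (1 - f * X) * saalschutzSum p g b e f (X * p) (n + 1) -
        b⁻¹ * (b - e * X) * (b - f * X) * saalschutzSum p g b e f X (n + 1) =
      (1 - g * X ^ 2 * p ^ 2) * qp X⁻¹ p n * qp (g * X * p ^ 2) p n * qp b p (n + 1) /
        (qp p p n * qp e p n * qp f p n) := by
  have hg : g = e * f / (b * p ^ 2) := by field_simp; linear_combination -hbal
  induction n with
  | zero =>
    simp only [saalschutzSum, zero_add, sum_range_one, racahBasis_zero, qp_zero, qp_succ, pow_zero,
      hg]
    field_simp
    ring
  | succ n ih =>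
    have ih := ih (fun m hm => hpn m (by omega)) (fun m hm => he m (by omega))
      fun m hm => hf m (by omega)
    have h₁ := hpn (n + 1) le_rfl
    have h₂ := he (n + 1) le_rfl
    have h₃ := hf (n + 1) le_rfl
    rw [saalschutzSum, saalschutzSum, sum_range_succ, sum_range_succ _ (n + 1), mul_add, mul_add,
      add_sub_add_comm]
    change _ - b⁻¹ * _ * _ * saalschutzSum p g b e f X (n + 1) + _ = _
    rw [← saalschutzSum, ih, racahBasis_mul_base_succ_eq_mul_qp hp hX, racahBasis_succ_eq_mul_qp]
    simp only [qp_succ _ p (n + 1), qp_succ _ p n] at h₁ h₂ h₃ ⊢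
    obtain ⟨h₁, h₁'⟩ := mul_ne_zero_iff.1 h₁
    obtain ⟨h₂, h₂'⟩ := mul_ne_zero_iff.1 h₂
    obtain ⟨h₃, h₃'⟩ := mul_ne_zero_iff.1 h₃
    simp only [pow_succ p n]
    generalize qp (g * X * p ^ 2) p n = G
    rw [hg]
    field_simp
    ring

theorem saalschutzSum_pow (hp : p ≠ 0) {g b e f : ℂ} (hb : b ≠ 0)
    (hbal : e * f = g * b * p ^ 2) (j : ℕ) (hpj : ∀ m ≤ j, qp p p m ≠ 0)
    (he : ∀ m ≤ j, qp e p m ≠ 0) (hf : ∀ m ≤ j, qp f p m ≠ 0) :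
    saalschutzSum p g b e f (p ^ j) (j + 1) * qp e p j * qp f p j =
      b ^ j * qp (e / b) p j * qp (f / b) p j := by
  induction j with
  | zero => simp [saalschutzSum, racahBasis_zero, qp_zero]
  | succ j ih =>
    have hrec := saalschutzSum_mul_base_sub hp (pow_ne_zero j hp) hb hbal (j + 1) hpj he hf
    have htop : saalschutzSum p g b e f (p ^ j) (j + 1 + 1) =
        saalschutzSum p g b e f (p ^ j) (j + 1) := by
      rw [saalschutzSum, sum_range_succ, racahBasis_pow_eq_zero hp g j.lt_succ_self, mul_zero,
        add_zero, saalschutzSum]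
    rw [htop, qp_inv_pow_eq_zero hp j.lt_succ_self, mul_zero, zero_mul, zero_mul, zero_div,
      sub_eq_zero, ← pow_succ] at hrec
    have ih := ih (fun m hm => hpj m (by omega)) (fun m hm => he m (by omega))
      fun m hm => hf m (by omega)
    calc saalschutzSum p g b e f (p ^ (j + 1)) (j + 1 + 1) * qp e p (j + 1) * qp f p (j + 1)
        = (1 - e * p ^ j) * (1 - f * p ^ j) *
            saalschutzSum p g b e f (p ^ (j + 1)) (j + 1 + 1) * qp e p j * qp f p j := by
          rw [qp_succ, qp_succ]; ring
      _ = b⁻¹ * (b - e * p ^ j) * (b - f * p ^ j) *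
            (saalschutzSum p g b e f (p ^ j) (j + 1) * qp e p j * qp f p j) := by
          rw [hrec]; ring
      _ = b ^ (j + 1) * qp (e / b) p (j + 1) * qp (f / b) p (j + 1) := by
          rw [ih, qp_succ, qp_succ]; field_simp; ring

lemma racahFun_endpoint (hp : p ≠ 0) (hP : ¬IsOfFinOrder p) {L N j : ℕ} (hL : j ≤ L) (hN : j ≤ N) :
    racahFun p (p ^ L)⁻¹ (p ^ N)⁻¹ j (p ^ L) * qp p p j * qp (p ^ N)⁻¹ p j =
      p ^ ((L + 1) * j) * qp (p ^ L)⁻¹ p j * qp (p ^ (L + N + 1))⁻¹ p j := by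
  have hcancel : racahFun p (p ^ L)⁻¹ (p ^ N)⁻¹ j (p ^ L) =
      saalschutzSum p ((p ^ L)⁻¹ * (p ^ N)⁻¹ / p ^ 2) (p ^ (L + 1)) p (p ^ N)⁻¹ (p ^ j)
        (j + 1) := by
    refine sum_congr rfl fun m hm => ?_
    have := qp_inv_pow_ne_zero hp hP ((mem_range_succ_iff.1 hm).trans hL)
    simp only [racahCoeff, racahBasis, one_mul, ← pow_succ]
    generalize qp (p ^ L)⁻¹ p m = Q at *
    field_simp
  have hquot₁ : p / p ^ (L + 1) = (p ^ L)⁻¹ := by rw [pow_succ]; field_simp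
  have hquot₂ : (p ^ N)⁻¹ / p ^ (L + 1) = (p ^ (L + N + 1))⁻¹ := by
    rw [show L + N + 1 = L + 1 + N by ring, pow_add p (L + 1)]; field_simp
  rw [hcancel, saalschutzSum_pow hp (pow_ne_zero _ hp) (by field_simp; ring) j
    (fun m _ => qp_self_ne_zero hP m) (fun m _ => qp_self_ne_zero hP m)
    (fun m hm => qp_inv_pow_ne_zero hp hP (hm.trans hN)), hquot₁, hquot₂, pow_mul]

end QSaalschutz

section RacahPairingValue

variable {p : ℂ}

lemma choose_two_add (a b : ℕ) : (a + b).choose 2 = a.choose 2 + b.choose 2 + a * b := by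
  induction b with
  | zero => simp
  | succ b ih =>
    rw [← add_assoc, Nat.choose_succ_succ' (a + b), Nat.choose_succ_succ' b, Nat.choose_one_right,
      Nat.choose_one_right, ih]
    ring

lemma sq_eq_two_mul_choose_add (k : ℕ) : k ^ 2 = 2 * k.choose 2 + k := by
  induction k with
  | zero => simp
  | succ k ih => rw [Nat.choose_succ_succ' k, Nat.choose_one_right, add_sq, ih]; ring

lemma choose_two_succ_left (k : ℕ) : (k + 1).choose 2 = k.choose 2 + k := by
  rw [Nat.choose_succ_succ', Nat.choose_one_right, add_comm]

lemma racahBasis_one_pow_mul (hp : p ≠ 0) (i d : ℕ) :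
    racahBasis p 1 (p ^ (i + d)) i * p ^ ((i + 1).choose 2 + i * d) * qp p p d =
      (-1) ^ i * qp p p (i + d + i) := by
  rw [racahBasis, one_mul, ← pow_succ, qp_self_add p (i + d) i]
  linear_combination qp (p ^ (i + d + 1)) p i * qp_inv_pow_mul hp i d

lemma racahFun_endpoint_mul (hp : p ≠ 0) (hP : ¬IsOfFinOrder p) (j s v : ℕ) :
    racahFun p (p ^ (j + s))⁻¹ (p ^ (j + s + v))⁻¹ j (p ^ (j + s)) *
        p ^ ((j + 1).choose 2 + j * s) *
        (qp p p j * qp p p s * qp p p (j + s + v) * qp p p (j + 2 * s + v + 1)) =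
      (-1) ^ j * (qp p p (j + s) * qp p p (s + v) * qp p p (2 * j + 2 * s + v + 1)) := by
  have hend := racahFun_endpoint hp hP (Nat.le_add_right j s) (show j ≤ j + s + v by omega)
  have hL := qp_inv_pow_mul hp j s
  have hN := qp_inv_pow_mul hp j (s + v)
  have hLN := qp_inv_pow_mul hp j (j + 2 * s + v + 1)
  rw [← add_assoc j s v] at hN
  rw [show j + (j + 2 * s + v + 1) = 2 * j + 2 * s + v + 1 by ring] at hLN
  rw [show j + s + (j + s + v) + 1 = 2 * j + 2 * s + v + 1 by ring] at hend
  have hsplit : p ^ ((j + 1).choose 2 + j * (j + 2 * s + v + 1)) =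
      p ^ ((j + 1).choose 2 + j * (s + v)) * p ^ ((j + s + 1) * j) := by
    rw [← pow_add]; ring_nf
  have hne : qp (p ^ (j + s + v))⁻¹ p j * p ^ ((j + 1).choose 2 + j * (j + 2 * s + v + 1)) ≠ 0 :=
    mul_ne_zero (qp_inv_pow_ne_zero hp hP (by omega)) (pow_ne_zero _ hp)
  refine mul_right_cancel₀ hne ?_
  rw [hsplit] at hLN ⊢
  generalize p ^ ((j + 1).choose 2 + j * (s + v)) = w at *
  generalize p ^ ((j + 1).choose 2 + j * s) = z at *
  generalize p ^ ((j + s + 1) * j) = y at *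
  linear_combination
    z * w * y * qp p p s * qp p p (j + s + v) * qp p p (j + 2 * s + v + 1) * hend +
      y * y * w * qp (p ^ (2 * j + 2 * s + v + 1))⁻¹ p j * qp p p (j + s + v) *
        qp p p (j + 2 * s + v + 1) * hL +
      (-1) ^ j * y * qp p p (j + s) * qp p p (j + s + v) * hLN -
      (-1) ^ j * y * qp p p (j + s) * qp p p (2 * j + 2 * s + v + 1) * hN

lemma racahWeight_mul_racahBasis_endpoint (hp : p ≠ 0) (hP : ¬IsOfFinOrder p) (L v : ℕ) :
    racahWeight p L (L + v) L * racahBasis p 1 (p ^ L) L * (qp p p v * qp p p (2 * L + v + 1)) =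
      (-1) ^ L * p ^ L.choose 2 := by
  have hbasis := racahBasis_one_pow_mul hp L 0
  have h₁ := qp_self_ne_zero hP v
  have h₂ := qp_self_ne_zero hP (2 * L + v + 1)
  have h₃ := qp_self_ne_zero hP (2 * L)
  have h₄ := one_sub_pow_ne_zero hP (k := 2 * L + 1) (by omega)
  rw [qp_zero, mul_one, mul_zero, add_zero, add_zero, ← two_mul, choose_two_succ_left] at hbasis
  rw [racahWeight, Nat.sub_self, Nat.add_sub_cancel_left, show L + L + 1 = 2 * L + 1 by ring,
    show L + v + L + 1 = 2 * L + v + 1 by ring, qp_zero, qp_self_succ p (2 * L),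
    sq_eq_two_mul_choose_add, two_mul (L.choose 2), add_assoc, pow_add p (L.choose 2)]
  field_simp
  linear_combination hbasis

lemma racahPairing_sub_one_mul (hp : p ≠ 0) (hP : ¬IsOfFinOrder p) (j s u v : ℕ) :
    p ^ s * (1 - p ^ (j + s + 1)) ^ 2 * (1 - p ^ (u + 1)) * (1 - p ^ (v + 1)) *
        racahPairing p (j + s + u + 1) (j + s + v + 1) (j + s) j =
      -(1 - p ^ (s + 1)) * (1 - p ^ (s + u + v + 2)) *
        racahPairing p (j + s + u + 1) (j + s + v + 1) (j + s + 1) j := by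
  have hrec := racahPairing_succ hp hP (show j ≤ j + s + u + 1 by omega)
    (show j ≤ j + s + v + 1 by omega) (j + s)
  have heigen : racahEigenvalue p (p ^ (j + s + u + 1))⁻¹ (p ^ (j + s + v + 1))⁻¹ j -
      racahEigenvalue p (p ^ (j + s + u + 1))⁻¹ (p ^ (j + s + v + 1))⁻¹ (j + s + 1) =
      (p ^ (j + s + 1))⁻¹ * (p ^ (s + u + v + 2))⁻¹ * (1 - p ^ (s + 1)) *
        (1 - p ^ (s + u + v + 2)) := by
    rw [racahEigenvalue_sub hp]
    field_simp
    ring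
  have hlower : racahLowering p (p ^ (j + s + u + 1))⁻¹ (p ^ (j + s + v + 1))⁻¹ (j + s) =
      -(1 - p ^ (j + s + 1)) ^ 2 * (p ^ (j + s + 1))⁻¹ * (p ^ (u + v + 2))⁻¹ * (1 - p ^ (u + 1)) *
        (1 - p ^ (v + 1)) := by
    rw [racahLowering]
    field_simp
    ring
  have hpow : p ^ (s + u + v + 2) = p ^ s * p ^ (u + v + 2) := by ring
  have hs := pow_ne_zero s hp
  have huv := pow_ne_zero (u + v + 2) hp
  have hjs := pow_ne_zero (j + s + 1) hp
  rw [heigen, hlower] at hrec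
  rw [hpow, mul_inv] at hrec
  field_simp at hrec
  rw [hpow]
  linear_combination hrec

lemma racahPairing_left_mul (hp : p ≠ 0) (hP : ¬IsOfFinOrder p) (j s w : ℕ) :
    racahPairing p (j + s) (j + s + w) (j + s) j * p ^ j *
        (qp p p s * qp p p w * qp p p j * qp p p (j + 2 * s + w + 1) * qp p p (j + s) *
          qp p p (j + s + w)) =
      (-1) ^ s * p ^ s.choose 2 * (qp p p (j + s) ^ 2 * qp p p (s + w)) := by
  have hsingle : racahPairing p (j + s) (j + s + w) (j + s) j =
      racahWeight p (j + s) (j + s + w) (j + s) * racahBasis p 1 (p ^ (j + s)) (j + s) *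
        racahFun p (p ^ (j + s))⁻¹ (p ^ (j + s + w))⁻¹ j (p ^ (j + s)) := by
    rw [racahPairing, min_eq_left (Nat.le_add_right _ _), sum_range_succ, sum_eq_zero, zero_add,
      mul_assoc]
    intro k hk
    rw [racahBasis_pow_eq_zero hp 1 (mem_range.1 hk), zero_mul, mul_zero]
  have hweight := racahWeight_mul_racahBasis_endpoint hp hP (j + s) w
  have hfun := racahFun_endpoint_mul hp hP j s w
  have hsign : (-1 : ℂ) ^ (j + s) * (-1) ^ j = (-1) ^ s := by
    rw [pow_add, mul_right_comm, ← pow_add, ← two_mul, pow_mul]; norm_num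
  have hpow : p ^ (j + s).choose 2 * p ^ j = p ^ s.choose 2 * p ^ ((j + 1).choose 2 + j * s) := by
    rw [← pow_add, ← pow_add, choose_two_add, choose_two_succ_left]
    ring_nf
  rw [← mul_add] at hfun
  have hne : qp p p (2 * (j + s) + w + 1) * p ^ ((j + 1).choose 2 + j * s) ≠ 0 :=
    mul_ne_zero (qp_self_ne_zero hP _) (pow_ne_zero _ hp)
  refine mul_right_cancel₀ hne ?_
  rw [hsingle]
  linear_combination
    racahFun p (p ^ (j + s))⁻¹ (p ^ (j + s + w))⁻¹ j (p ^ (j + s)) *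
        p ^ ((j + 1).choose 2 + j * s) * p ^ j * qp p p s * qp p p j * qp p p (j + 2 * s + w + 1) *
        qp p p (j + s) * qp p p (j + s + w) * hweight +
      (-1) ^ (j + s) * p ^ (j + s).choose 2 * p ^ j * qp p p (j + s) * hfun +
      qp p p (j + s) ^ 2 * qp p p (s + w) * qp p p (2 * (j + s) + w + 1) *
        ((-1) ^ (j + s) * (-1) ^ j * hpow +
          p ^ s.choose 2 * p ^ ((j + 1).choose 2 + j * s) * hsign)

theorem racahPairing_mul (hp : p ≠ 0) (hP : ¬IsOfFinOrder p) (j s u w : ℕ) :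
    racahPairing p (j + s + u) (j + s + u + w) (j + s) j * p ^ j *
        (qp p p s * qp p p u * qp p p (u + w) * qp p p j * qp p p (j + 2 * s + 2 * u + w + 1) *
          qp p p (j + s + u) * qp p p (j + s + u + w)) =
      (-1) ^ s * p ^ s.choose 2 * (qp p p (j + s) ^ 2 * qp p p (s + 2 * u + w)) := by
  induction u generalizing s with
  | zero => simpa [qp_zero] using racahPairing_left_mul hp hP j s w
  | succ u ih =>
    have hrec := racahPairing_sub_one_mul hp hP j s u (u + w)
    have hnext := ih (s + 1)
    have hne : p ^ s * (1 - p ^ (j + s + 1)) ^ 2 ≠ 0 :=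
      mul_ne_zero (pow_ne_zero s hp) (pow_ne_zero 2 (one_sub_pow_ne_zero hP (by omega)))
    refine mul_left_cancel₀ hne ?_
    rw [show j + (s + 1) + u = j + s + u + 1 by ring,
      show j + s + u + 1 + w = j + s + (u + w) + 1 by ring,
      show j + 2 * (s + 1) + 2 * u + w + 1 = j + 2 * s + 2 * u + w + 3 by ring,
      show s + 1 + 2 * u + w = s + 2 * u + w + 1 by ring, ← add_assoc j s 1, choose_two_succ_left,
      qp_self_succ p s, qp_self_succ p (j + s)] at hnext
    rw [show s + u + (u + w) + 2 = s + 2 * u + w + 2 by ring] at hrec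
    rw [← add_assoc (j + s) u, show j + s + u + 1 + w = j + s + (u + w) + 1 by ring,
      show j + 2 * s + 2 * (u + 1) + w + 1 = j + 2 * s + 2 * u + w + 3 by ring,
      show s + 2 * (u + 1) + w = s + 2 * u + w + 1 + 1 by ring, show u + 1 + w = u + w + 1 by ring,
      qp_self_succ p u, qp_self_succ p (u + w), qp_self_succ p (s + 2 * u + w + 1)]
    linear_combination
      p ^ j * qp p p s * qp p p u * qp p p (u + w) * qp p p j *
          qp p p (j + 2 * s + 2 * u + w + 3) * qp p p (j + s + u + 1) *
          qp p p (j + s + (u + w) + 1) * hrec -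
        (1 - p ^ (s + 2 * u + w + 2)) * hnext

theorem racahPairing_self_mul (hp : p ≠ 0) (hP : ¬IsOfFinOrder p) (j m n : ℕ) :
    racahPairing p (j + m) (j + n) j j * p ^ j *
        (qp p p m * qp p p n * qp p p (j + m + n + 1) * qp p p (j + m) * qp p p (j + n)) =
      qp p p j * qp p p (m + n) := by
  wlog h : m ≤ n generalizing m n
  · have := this n m (by omega)
    rw [racahPairing_comm, add_comm m n, ← this, show j + n + m + 1 = j + m + n + 1 by ring]
    ring
  obtain ⟨w, rfl⟩ := Nat.exists_eq_add_of_le h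
  have hval := racahPairing_mul hp hP j 0 m w
  refine mul_left_cancel₀ (qp_self_ne_zero hP j) ?_
  simp only [add_zero, mul_zero, zero_add, qp_zero, pow_zero, Nat.choose_zero_succ, one_mul] at hval
  rw [← add_assoc, show j + m + (m + w) + 1 = j + 2 * m + w + 1 by ring,
    show m + (m + w) = 2 * m + w by ring]
  linear_combination hval

end RacahPairingValue

section Joukowski

open Filter Topology

/-- The value of `f` at `(z + z⁻¹) / 2`, i.e. `f` read as a symmetric Laurent polynomial in `z`. -/
def joukowskiEval (f : ℂ[X]) (z : ℂ) : ℂ := f.eval ((z + z⁻¹) / 2)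

lemma joukowskiEval_inv (f : ℂ[X]) (z : ℂ) : joukowskiEval f z⁻¹ = joukowskiEval f z := by
  rw [joukowskiEval, joukowskiEval, inv_inv, add_comm]

lemma joukowskiEval_zero (z : ℂ) : joukowskiEval 0 z = 0 := eval_zero

lemma joukowskiEval_one (z : ℂ) : joukowskiEval 1 z = 1 := eval_one

lemma joukowskiEval_C_mul (a : ℂ) (f : ℂ[X]) (z : ℂ) :
    joukowskiEval (Polynomial.C a * f) z = a * joukowskiEval f z := eval_C_mul

lemma joukowskiEval_sum_mul (s : Finset ℕ) (f g : ℕ → ℂ[X]) (z : ℂ) :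
    joukowskiEval (∑ k ∈ s, f k * g k) z =
      ∑ k ∈ s, joukowskiEval (f k) z * joukowskiEval (g k) z := by
  simp only [joukowskiEval, eval_finsetSum, eval_mul]

lemma tendsto_pow_mul_joukowskiEval {f : ℂ[X]} {e : ℕ} (hf : f.natDegree ≤ e) :
    Tendsto (fun z => z ^ e * joukowskiEval f z) (𝓝[≠] 0) (𝓝 (f.coeff e / 2 ^ e)) := by
  have hlim : Tendsto (fun z : ℂ => ∑ r ∈ range (e + 1),
      f.coeff r * (z ^ (e - r) * ((z ^ 2 + 1) / 2) ^ r)) (𝓝 0) (𝓝 (f.coeff e / 2 ^ e)) := by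
    refine (Continuous.tendsto (by fun_prop) 0).trans_eq ?_
    rw [sum_range_succ, sum_eq_zero fun r hr => by
      rw [zero_pow (Nat.sub_ne_zero_of_lt (mem_range.1 hr)), zero_mul, mul_zero]]
    simp [div_eq_mul_inv]
  refine (hlim.mono_left nhdsWithin_le_nhds).congr' ?_
  filter_upwards [self_mem_nhdsWithin] with z hz
  rw [joukowskiEval, eval_eq_sum_range' (Nat.lt_succ_of_le hf), mul_sum]
  refine sum_congr rfl fun r hr => ?_
  have hjoukowski : (z ^ 2 + 1) / 2 = z * ((z + z⁻¹) / 2) := by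
    field_simp [show z ≠ 0 from hz]
  rw [hjoukowski, mul_pow, ← pow_sub_mul_pow z (Nat.lt_succ_iff.1 (mem_range.1 hr))]
  ring

lemma tendsto_pow_mul_joukowskiEval_mul {f : ℂ[X]} {e : ℕ} (hf : f.natDegree ≤ e) {a : ℂ}
    (ha : a ≠ 0) :
    Tendsto (fun z => z ^ e * joukowskiEval f (a * z)) (𝓝[≠] 0)
      (𝓝 ((a ^ e)⁻¹ * (f.coeff e / 2 ^ e))) := by
  have hscale : Tendsto (a * ·) (𝓝[≠] 0) (𝓝[≠] (0 : ℂ)) := by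
    refine tendsto_nhdsWithin_of_tendsto_nhds_of_eventually_within _ ?_ ?_
    · simpa using ((continuous_const_mul a).tendsto 0).mono_left nhdsWithin_le_nhds
    · filter_upwards [self_mem_nhdsWithin] with z hz using mul_ne_zero ha hz
  refine (((tendsto_pow_mul_joukowskiEval hf).comp hscale).const_mul _).congr fun z => ?_
  have hae : a ^ e ≠ 0 := pow_ne_zero e ha
  simp only [Function.comp_apply, mul_pow]
  field_simp

/-- Compare the lowest Laurent coefficients of both sides: the coupling to `g` carries an extra
factor `z` and drops out. -/
lemma sub_mul_coeff_eq_zero_of_difference_equation {q : ℂ} (hq : q ≠ 0) {a b c : ℂ}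
    {f g : ℂ[X]} {e : ℕ} (hf : f.natDegree ≤ e) (hg : g.natDegree ≤ e)
    (h : ∀ z ≠ 0, (1 - a * z ^ 2) * joukowskiEval f (q * z) -
        (z ^ 2 - a) * joukowskiEval f (q⁻¹ * z) =
      b * (1 - z ^ 2) * joukowskiEval f z +
        c * z * (joukowskiEval g (q * z) - joukowskiEval g (q⁻¹ * z))) :
    ((q ^ e)⁻¹ + a * q ^ e - b) * f.coeff e = 0 := by
  have hz : Tendsto (fun z : ℂ => z) (𝓝[≠] 0) (𝓝 0) := tendsto_id.mono_left nhdsWithin_le_nhds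
  have hz2 : Tendsto (fun z : ℂ => z ^ 2) (𝓝[≠] 0) (𝓝 0) := by simpa using hz.pow 2
  have hleft := (((hz2.const_mul a).const_sub 1).mul
      (tendsto_pow_mul_joukowskiEval_mul hf hq)).sub
    ((hz2.sub_const a).mul (tendsto_pow_mul_joukowskiEval_mul hf (inv_ne_zero hq)))
  have hright := (((hz2.const_sub 1).const_mul b).mul (tendsto_pow_mul_joukowskiEval hf)).add
    ((hz.const_mul c).mul ((tendsto_pow_mul_joukowskiEval_mul hg hq).sub
      (tendsto_pow_mul_joukowskiEval_mul hg (inv_ne_zero hq))))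
  have heq := tendsto_nhds_unique hleft <| hright.congr' <| by
    filter_upwards [self_mem_nhdsWithin] with z hz
    linear_combination -z ^ e * h z hz
  have htwo : (2 : ℂ) ^ e ≠ 0 := pow_ne_zero e two_ne_zero
  simp only [inv_pow, inv_inv] at heq
  field_simp at heq ⊢
  linear_combination heq

end Joukowski

section Ultraspherical

open Filter Topology

variable {p : ℂ}

/-- The coefficient `(β;p)_s / (p;p)_s` of the q-binomial series. -/
def qBinomialCoeff (p β : ℂ) (s : ℕ) : ℂ := qp β p s / qp p p s

lemma qBinomialCoeff_succ (hP : ¬IsOfFinOrder p) (β : ℂ) (s : ℕ) :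
    qBinomialCoeff p β (s + 1) * (1 - p ^ (s + 1)) = qBinomialCoeff p β s * (1 - β * p ^ s) := by
  have h₁ := one_sub_pow_ne_zero hP s.succ_pos
  have h₂ := qp_self_ne_zero hP s
  rw [qBinomialCoeff, qBinomialCoeff, qp_self_succ, qp_succ]
  field_simp

/-- The Rogers–Szegő type polynomial `∑_s (β)_s (β)_{d-s} / ((p)_s (p)_{d-s}) t^s`, which at
`t = z²` is `z^d` times the continuous q-ultraspherical polynomial at `(z + z⁻¹) / 2`. -/
def ultraSum (p β : ℂ) (d : ℕ) (t : ℂ) : ℂ :=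
  ∑ s ∈ range (d + 1), qBinomialCoeff p β s * qBinomialCoeff p β (d - s) * t ^ s

lemma sum_range_mul_pow_add_shift (a b : ℕ → ℂ) (M : ℕ) (t : ℂ) (ha : a 0 = 0) (hb : b M = 0) :
    ∑ s ∈ range (M + 1), (a s + b s * t) * t ^ s =
      ∑ s ∈ range M, (a (s + 1) + b s) * t ^ (s + 1) := by
  simp only [add_mul, sum_add_distrib]
  rw [sum_range_succ' (fun s => a s * t ^ s), sum_range_succ (fun s => b s * t * t ^ s), ha, hb]
  simp only [zero_mul, add_zero, mul_assoc, pow_succ']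

lemma ultraSum_succ_mul_base (hP : ¬IsOfFinOrder p) (β : ℂ) (D : ℕ) (t : ℂ) :
    (β * p ^ D - t) * ultraSum p β (D + 1) (p * t) -
        p ^ D * (β - p * t) * ultraSum p β (D + 1) t =
      (β ^ 2 * p ^ D - 1) * t * ultraSum p β D (p * t) := by
  set u := qBinomialCoeff p β with hu
  have hshift := sum_range_mul_pow_add_shift
    (fun s => u s * u (D + 1 - s) * (β * p ^ D * (p ^ s - 1)))
    (fun s => u s * u (D + 1 - s) * (p ^ (D + 1) - p ^ s)) (D + 1) t (by simp) (by simp)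
  rw [ultraSum, ultraSum, ultraSum, mul_sum, mul_sum, mul_sum, ← sum_sub_distrib, ← hu]
  refine Eq.trans (sum_congr rfl fun s _ => ?_) (hshift.trans (sum_congr rfl fun s hs => ?_))
  · rw [mul_pow]; ring
  · obtain ⟨e, rfl⟩ := Nat.exists_eq_add_of_le (Nat.lt_succ_iff.1 (mem_range.1 hs))
    have hs := qBinomialCoeff_succ hP β s
    have he := qBinomialCoeff_succ hP β e
    rw [← hu] at hs he
    simp only [show s + e + 1 - (s + 1) = e by omega, show s + e + 1 - s = e + 1 by omega,
      show s + e - s = e by omega, mul_pow]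
    linear_combination -β * p ^ (s + e) * u e * t ^ (s + 1) * hs - p ^ s * u s * t ^ (s + 1) * he

lemma ultraSum_difference_equation (hp : p ≠ 0) (hP : ¬IsOfFinOrder p) (β : ℂ) (M : ℕ) (t : ℂ) :
    (1 - β * t) * ultraSum p β M (p * t) - (t - β) * p ^ M * ultraSum p β M (p⁻¹ * t) =
      (1 + β * p ^ M) * (1 - t) * ultraSum p β M t := by
  set u := qBinomialCoeff p β with hu
  have hshift := sum_range_mul_pow_add_shift
    (fun s => -(u s * u (M - s) * (1 - p ^ s) * (1 - β * p ^ (M - s))))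
    (fun s => u s * u (M - s) * (1 - β * p ^ s) * (1 - p ^ (M - s))) M t (by simp) (by simp)
  rw [ultraSum, ultraSum, ultraSum, mul_sum, mul_sum, mul_sum, ← sum_sub_distrib, ← hu,
    ← sub_eq_zero, ← sum_sub_distrib]
  refine Eq.trans (sum_congr rfl fun s hs => ?_) (hshift.trans (sum_eq_zero fun s hs => ?_))
  · obtain ⟨e, rfl⟩ := Nat.exists_eq_add_of_le (Nat.lt_succ_iff.1 (mem_range.1 hs))
    have hinv : p ^ s * p⁻¹ ^ s = 1 := by rw [← mul_pow, mul_inv_cancel₀ hp, one_pow]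
    rw [Nat.add_sub_cancel_left, mul_pow, mul_pow, pow_add]
    linear_combination -(t - β) * p ^ e * u s * u e * t ^ s * hinv
  · obtain ⟨e, rfl⟩ := Nat.exists_eq_add_of_lt (mem_range.1 hs)
    have hs := qBinomialCoeff_succ hP β s
    have he := qBinomialCoeff_succ hP β e
    rw [← hu] at hs he
    simp only [show s + e + 1 - (s + 1) = e by omega, show s + e + 1 - s = e + 1 by omega]
    linear_combination u s * (1 - β * p ^ s) * t ^ (s + 1) * he -
      u e * (1 - β * p ^ e) * t ^ (s + 1) * hs

variable {q : ℂ} {C : ℂ → ℂ → ℕ → ℂ[X]}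

namespace IsUltra

lemma natDegree_le (hC : IsUltra C) (p β : ℂ) (n : ℕ) : (C p β n).natDegree ≤ n :=
  natDegree_le_of_degree_le (hC p β n).1

lemma joukowskiEval_eq (hC : IsUltra C) (p β : ℂ) (d : ℕ) {z : ℂ} (hz : z ≠ 0) :
    joukowskiEval (C p β d) z = (z ^ d)⁻¹ * ultraSum p β d (z ^ 2) := by
  rw [← joukowskiEval_inv, joukowskiEval, (hC p β d).2 z⁻¹ (inv_ne_zero hz), ultraSum, mul_sum]
  refine sum_congr rfl fun r _ => ?_
  have hpow : z⁻¹ ^ ((d : ℤ) - 2 * r) = (z ^ d)⁻¹ * (z ^ 2) ^ r := by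
    rw [zpow_sub₀ (inv_ne_zero hz), _root_.zpow_mul, zpow_natCast, zpow_natCast]
    simp [div_eq_mul_inv]
  rw [hpow, qBinomialCoeff, qBinomialCoeff, div_mul_div_comm]
  ring

lemma coeff_self (hC : IsUltra C) (p β : ℂ) (n : ℕ) :
    (C p β n).coeff n = 2 ^ n * qBinomialCoeff p β n := by
  have hlim : Tendsto (fun z => ultraSum p β n (z ^ 2)) (𝓝[≠] 0) (𝓝 (ultraSum p β n 0)) := by
    have hcont : Continuous fun z => ultraSum p β n (z ^ 2) := by unfold ultraSum; fun_prop
    simpa using (hcont.tendsto 0).mono_left nhdsWithin_le_nhds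
  have heq := tendsto_nhds_unique (tendsto_pow_mul_joukowskiEval (hC.natDegree_le p β n))
    (hlim.congr' <| by
      filter_upwards [self_mem_nhdsWithin] with z hz
      rw [hC.joukowskiEval_eq p β n hz, mul_inv_cancel_left₀ (pow_ne_zero n hz)])
  have hzero : ultraSum p β n 0 = qBinomialCoeff p β n := by
    rw [ultraSum, sum_range_succ', sum_eq_zero fun s _ => by rw [zero_pow s.succ_ne_zero, mul_zero]]
    simp [qBinomialCoeff, qp_zero]
  rw [← hzero, ← heq]
  field_simp

lemma apply_zero (hC : IsUltra C) (p β : ℂ) : C p β 0 = 1 := by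
  rw [eq_C_of_natDegree_le_zero (hC.natDegree_le p β 0), hC.coeff_self]
  simp [qBinomialCoeff, qp_zero]

lemma difference_equation (hC : IsUltra C) (hq : q ≠ 0) (hP : ¬IsOfFinOrder (q ^ 2)) (β : ℂ)
    (M : ℕ) {z : ℂ} (hz : z ≠ 0) :
    (1 - β * z ^ 2) * joukowskiEval (C (q ^ 2) β M) (q * z) -
        (z ^ 2 - β) * joukowskiEval (C (q ^ 2) β M) (q⁻¹ * z) =
      ((q ^ M)⁻¹ + β * q ^ M) * (1 - z ^ 2) * joukowskiEval (C (q ^ 2) β M) z := by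
  have h := ultraSum_difference_equation (pow_ne_zero 2 hq) hP β M (z ^ 2)
  rw [hC.joukowskiEval_eq _ _ _ (mul_ne_zero hq hz),
    hC.joukowskiEval_eq _ _ _ (mul_ne_zero (inv_ne_zero hq) hz), hC.joukowskiEval_eq _ _ _ hz]
  simp only [mul_pow, inv_pow]
  rw [← pow_mul, mul_comm 2 M, pow_mul] at h
  have hqM := pow_ne_zero M hq
  have hzM := pow_ne_zero M hz
  generalize ultraSum _ β M (q ^ 2 * z ^ 2) = up at *
  generalize ultraSum _ β M ((q ^ 2)⁻¹ * z ^ 2) = down at *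
  field_simp
  linear_combination h

lemma succ_mul_base (hC : IsUltra C) (hq : q ≠ 0) (hP : ¬IsOfFinOrder (q ^ 2)) (i D : ℕ)
    {z : ℂ} (hz : z ≠ 0) :
    (1 - (q ^ 2) ^ (i + 1) * z ^ 2) *
          joukowskiEval (C (q ^ 2) ((q ^ 2) ^ (i + 1 + D))⁻¹ (D + 1)) (q * z) -
        q⁻¹ * ((q ^ 2) ^ (i + 1 + D))⁻¹ * (1 - (q ^ 2) ^ (i + 1 + D + (i + 1))) * z *
          joukowskiEval (C (q ^ 2) ((q ^ 2) ^ (i + 1 + D))⁻¹ D) (q * z) =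
      (q ^ (D + 1))⁻¹ * (1 - (q ^ 2) ^ (i + 1 + D + 1) * z ^ 2) *
        joukowskiEval (C (q ^ 2) ((q ^ 2) ^ (i + 1 + D))⁻¹ (D + 1)) z := by
  have h := ultraSum_succ_mul_base hP ((q ^ 2) ^ (i + 1 + D))⁻¹ D (z ^ 2)
  rw [hC.joukowskiEval_eq _ _ _ (mul_ne_zero hq hz),
    hC.joukowskiEval_eq _ _ _ (mul_ne_zero hq hz), hC.joukowskiEval_eq _ _ _ hz]
  simp only [mul_pow, pow_add, pow_one] at h ⊢
  have hqD := pow_ne_zero D hq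
  have hpD : (q ^ 2) ^ D ≠ 0 := pow_ne_zero D (pow_ne_zero 2 hq)
  have hpi : (q ^ 2) ^ i ≠ 0 := pow_ne_zero i (pow_ne_zero 2 hq)
  have hzD := pow_ne_zero D hz
  generalize (q ^ 2) ^ D = x at *
  generalize (q ^ 2) ^ i = y at *
  field_simp at h ⊢
  linear_combination h

end IsUltra

end Ultraspherical

section Entries

variable {q : ℂ} {C : ℂ → ℂ → ℕ → ℂ[X]}

/-- The scalar factor of `lowerEntry`. -/
def lowerCoeff (q : ℂ) (k i : ℕ) : ℂ :=
  q ^ ((2 * k + 1) * (k - i)) *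
    (qp (q ^ 2) (q ^ 2) k * qp (q ^ 2) (q ^ 2) (k + i) /
      (qp (q ^ 2) (q ^ 2) (2 * k) * qp (q ^ 2) (q ^ 2) i))

/-- The `(k, i)`-entry of the inverse of the unipotent lower triangular matrix `L(x)` in the LDU
decomposition of the weight, as a polynomial in `x`. -/
def lowerEntry (q : ℂ) (C : ℂ → ℂ → ℕ → ℂ[X]) (k i : ℕ) : ℂ[X] :=
  if i ≤ k then
    Polynomial.C (lowerCoeff q k i) * C (q ^ 2) ((q ^ 2) ^ k)⁻¹ (k - i)
  else 0

/-- The scalar factor of `decoupledEntry`. -/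
def decoupledCoeff (q : ℂ) (L N j k : ℕ) : ℂ :=
  (-1) ^ k * q ^ ((N : ℤ) - (k : ℤ) ^ 2) *
      (qp (q ^ 2) (q ^ 2) (2 * k) * qp (q ^ 2) (q ^ 2) (N - k) * qp (q ^ 2) (q ^ 2) L *
        qp (q ^ 2) (q ^ 2) (L + 1) * qp (q ^ 2) (q ^ 2) N / qp (q ^ 2) (q ^ 2) k) *
    (racahWeight (q ^ 2) L N k *
      racahFun (q ^ 2) ((q ^ 2) ^ L)⁻¹ ((q ^ 2) ^ N)⁻¹ j ((q ^ 2) ^ k))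

/-- The `(k, j)`-entry of `L(x)ᵀ P_n(x)`, where `N = n + j`: the rows of this matrix are decoupled,
each satisfying a scalar q-difference equation. -/
def decoupledEntry (q : ℂ) (L : ℕ) (C : ℂ → ℂ → ℕ → ℂ[X]) (N j k : ℕ) : ℂ[X] :=
  Polynomial.C (decoupledCoeff q L N j k) * C (q ^ 2) ((q ^ 2) ^ (k + 1)) (N - k)

/-- The `(i, j)`-entry of `P_n` in terms of `N = n + j`, for unrestricted `i` and `j`. -/
def entry (q : ℂ) (L : ℕ) (C : ℂ → ℂ → ℕ → ℂ[X]) (N i j : ℕ) : ℂ[X] :=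
  ∑ k ∈ range (min L N + 1), lowerEntry q C k i * decoupledEntry q L C N j k

lemma lowerEntry_of_le {k i : ℕ} (h : i ≤ k) :
    lowerEntry q C k i = Polynomial.C (lowerCoeff q k i) * C (q ^ 2) ((q ^ 2) ^ k)⁻¹ (k - i) :=
  if_pos h

lemma lowerEntry_of_lt {k i : ℕ} (h : k < i) : lowerEntry q C k i = 0 := if_neg h.not_ge

lemma natDegree_lowerEntry_le (hC : IsUltra C) (k i : ℕ) :
    (lowerEntry q C k i).natDegree ≤ k - i := by
  rcases le_or_gt i k with h | h
  · rw [lowerEntry_of_le h]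
    exact (natDegree_C_mul_le _ _).trans (hC.natDegree_le _ _ _)
  · simp [lowerEntry_of_lt h]

lemma natDegree_decoupledEntry_le (hC : IsUltra C) (L N j k : ℕ) :
    (decoupledEntry q L C N j k).natDegree ≤ N - k :=
  (natDegree_C_mul_le _ _).trans (hC.natDegree_le _ _ _)

lemma natDegree_entry_le (hC : IsUltra C) (L N i j : ℕ) :
    (entry q L C N i j).natDegree ≤ N - i := by
  refine natDegree_sum_le_of_forall_le _ _ fun k hk => ?_
  rcases le_or_gt i k with h | h
  · refine natDegree_mul_le_of_le (natDegree_lowerEntry_le hC k i)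
      (natDegree_decoupledEntry_le hC L N j k) |>.trans ?_
    have := mem_range.1 hk
    omega
  · simp [lowerEntry_of_lt h]

lemma entry_eq_zero {L N i : ℕ} (h : min L N < i) (j : ℕ) : entry q L C N i j = 0 :=
  sum_eq_zero fun k hk => by
    rw [lowerEntry_of_lt (show k < i by have := mem_range.1 hk; omega), zero_mul]

lemma zpow_eq_sq_pow {a : ℤ} {m : ℕ} (h : a = 2 * (m : ℤ)) : q ^ a = (q ^ 2) ^ m := by
  rw [h, _root_.zpow_mul, zpow_natCast, zpow_ofNat]

lemma zpow_eq_inv_sq_pow {a : ℤ} {m : ℕ} (h : a = -(2 * (m : ℤ))) : q ^ a = ((q ^ 2) ^ m)⁻¹ := by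
  rw [h, _root_.zpow_neg, zpow_eq_sq_pow rfl]

lemma qRacah_eq_racahFun {p : ℂ} (hp : p ≠ 0) (L N k j : ℕ) :
    qRacah p 1 1 (p ^ (N + 1))⁻¹ (p ^ (L + 1))⁻¹ k j =
      racahFun p (p ^ L)⁻¹ (p ^ N)⁻¹ j (p ^ k) := by
  have hshift : ∀ m : ℕ, (p ^ (m + 1))⁻¹ * p = (p ^ m)⁻¹ := fun m => by
    rw [pow_succ]; field_simp
  have hdual : (p ^ (N + 1))⁻¹ * (p ^ (L + 1))⁻¹ * p ^ (j + 1) =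
      (p ^ L)⁻¹ * (p ^ N)⁻¹ / p ^ 2 * p ^ j * p := by
    simp only [pow_succ]; field_simp
  rw [racahFun, qRacah, ← sum_subset (range_mono (show min k j + 1 ≤ j + 1 by omega))]
  · refine sum_congr rfl fun m _ => ?_
    rw [one_mul (p ^ (L + 1))⁻¹, hshift, hshift, hdual, one_mul (1 : ℂ), one_mul p, one_mul,
      _root_.zpow_neg, _root_.zpow_neg, zpow_natCast, zpow_natCast, racahCoeff, racahBasis,
      racahBasis, one_mul (p ^ k), ← pow_succ]
    simp only [div_mul_eq_mul_div]
    ring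
  · intro m hm hm'
    rw [mem_range] at hm hm'
    rw [racahBasis_pow_eq_zero hp 1 (show k < m by omega), mul_zero]

lemma qp_inv_pow_self (hq : q ≠ 0) (hP : ¬IsOfFinOrder (q ^ 2)) {k m : ℕ} (h : k ≤ m) :
    qp ((q ^ 2) ^ m)⁻¹ (q ^ 2) k =
      (-1) ^ k * q ^ ((k : ℤ) ^ 2 - k - 2 * k * m) *
        (qp (q ^ 2) (q ^ 2) m / qp (q ^ 2) (q ^ 2) (m - k)) := by
  obtain ⟨e, rfl⟩ := Nat.exists_eq_add_of_le h
  have hmul := qp_inv_pow_mul (pow_ne_zero 2 hq) k e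
  have hpow : (q ^ 2) ^ ((k + 1).choose 2 + k * e) =
      (q ^ ((k : ℤ) ^ 2 - k - 2 * k * ((k + e : ℕ) : ℤ)))⁻¹ := by
    have hchoose := sq_eq_two_mul_choose_add (k + 1)
    rw [← pow_mul, ← _root_.zpow_neg, ← zpow_natCast]
    congr 1
    zify at hchoose
    push_cast
    linear_combination -hchoose
  have hne := qp_self_ne_zero hP e
  have hz := zpow_ne_zero ((k : ℤ) ^ 2 - k - 2 * k * ((k + e : ℕ) : ℤ)) hq
  rw [hpow] at hmul
  rw [Nat.add_sub_cancel_left]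
  field_simp at hmul ⊢
  exact hmul

lemma lowerCoeff_mul_decoupledCoeff (hq : q ≠ 0) (hP : ¬IsOfFinOrder (q ^ 2)) {L n j k i : ℕ}
    (hi : i ≤ k) (hL : k ≤ L) (hN : k ≤ n + j) :
    (-1 : ℂ) ^ k *
        q ^ ((n : ℤ) + (2 * (k : ℤ) + 1) * ((k : ℤ) - (i : ℤ)) + (j : ℤ) * (2 * (k : ℤ) + 1) +
          2 * (k : ℤ) * ((L : ℤ) + (n : ℤ) + 1) - (k : ℤ) ^ 2) *
        (qp (q ^ 2) (q ^ 2) k * qp (q ^ 2) (q ^ 2) (k + i) /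
          (qp (q ^ 2) (q ^ 2) (2 * k) * qp (q ^ 2) (q ^ 2) i)) *
        (qp ((q ^ 2) ^ L)⁻¹ (q ^ 2) k * qp ((q ^ 2) ^ (n + j))⁻¹ (q ^ 2) k /
          (qp (q ^ 2) (q ^ 2) k * qp ((q ^ 2) ^ (L + 1 + 1)) (q ^ 2) k)) *
        (qp (q ^ 2) (q ^ 2) (n + j - k) / qp ((q ^ 2) ^ (2 * k + 1 + 1)) (q ^ 2) (n + j - k)) *
        racahFun (q ^ 2) ((q ^ 2) ^ L)⁻¹ ((q ^ 2) ^ (n + j))⁻¹ j ((q ^ 2) ^ k) =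
      lowerCoeff q k i * decoupledCoeff q L (n + j) j k := by
  have hexp : q ^ ((n : ℤ) + (2 * (k : ℤ) + 1) * ((k : ℤ) - (i : ℤ)) +
        (j : ℤ) * (2 * (k : ℤ) + 1) + 2 * (k : ℤ) * ((L : ℤ) + (n : ℤ) + 1) - (k : ℤ) ^ 2) *
      (q ^ ((k : ℤ) ^ 2 - k - 2 * k * L) * q ^ ((k : ℤ) ^ 2 - k - 2 * k * ((n + j : ℕ) : ℤ))) =
      q ^ ((2 * k + 1) * (k - i)) * q ^ (((n + j : ℕ) : ℤ) - (k : ℤ) ^ 2) * (q ^ 2) ^ k ^ 2 := by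
    rw [← pow_mul q 2 (k ^ 2)]
    simp only [← zpow_natCast q, ← zpow_add₀ hq]
    congr 1
    push_cast [hi]
    ring
  have hsign : ((-1 : ℂ) ^ k) ^ 2 = 1 := by
    rw [pow_right_comm, neg_one_sq, one_pow]
  have hL' := qp_self_add (q ^ 2) (L + 1) k
  have hN' := qp_self_add (q ^ 2) (2 * k + 1) (n + j - k)
  rw [show L + 1 + k = L + k + 1 by ring] at hL'
  rw [show 2 * k + 1 + (n + j - k) = n + j + k + 1 by omega] at hN'
  rw [qp_inv_pow_self hq hP hL, qp_inv_pow_self hq hP hN, lowerCoeff, decoupledCoeff, racahWeight,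
    hL', hN', qp_self_succ _ (2 * k)]
  have h₁ := one_sub_pow_ne_zero hP (k := 2 * k + 1) (by omega)
  have hne := qp_self_ne_zero hP
  have hL₂ := qp_pow_ne_zero hP (L + 1) k
  have hN₂ := qp_pow_ne_zero hP (2 * k + 1) (n + j - k)
  have := hne k; have := hne i; have := hne (2 * k); have := hne (L - k); have := hne (n + j - k)
  have := hne (L + 1)
  generalize racahFun _ _ _ _ _ = R
  field_simp
  rw [hsign]
  linear_combination (qp (q ^ 2) (q ^ 2) (k + i) * qp (q ^ 2) (q ^ 2) L *
    qp (q ^ 2) (q ^ 2) (n + j) * R) * hexp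

lemma Pm_apply (hq : q ≠ 0) (hP : ¬IsOfFinOrder (q ^ 2)) (L n : ℕ) (i j : Fin (L + 1)) :
    Pm q L C n i j = entry q L C (n + j) i j := by
  have hsub : Finset.Icc (i : ℕ) (min L (n + j)) ⊆ range (min L (n + j) + 1) := fun k hk => by
    rw [mem_range]; have := mem_Icc.1 hk; omega
  rw [Pm, of_apply, entry, ← sum_subset hsub]
  · refine sum_congr rfl fun k hk => ?_
    obtain ⟨hik, hk⟩ := mem_Icc.1 hk
    rw [lowerEntry_of_le hik, decoupledEntry, mul_mul_mul_comm, ← Polynomial.C_mul,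
      ← lowerCoeff_mul_decoupledCoeff hq hP hik (hk.trans (min_le_left _ _))
        (hk.trans (min_le_right _ _)),
      ← qRacah_eq_racahFun (pow_ne_zero 2 hq),
      zpow_eq_inv_sq_pow (a := -(2 * (L : ℤ))) (m := L) rfl,
      zpow_eq_inv_sq_pow (a := -(2 * (k : ℤ))) (m := k) rfl,
      zpow_eq_inv_sq_pow (a := -(2 * ((j : ℕ) : ℤ) + 2 * (n : ℤ))) (m := n + j)
        (by push_cast; ring),
      zpow_eq_inv_sq_pow (a := -(2 * (n : ℤ) + 2 * ((j : ℕ) : ℤ) + 2)) (m := n + j + 1)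
        (by push_cast; ring),
      zpow_eq_inv_sq_pow (a := -(2 * (L : ℤ) + 2)) (m := L + 1) (by push_cast; ring),
      zpow_eq_sq_pow (a := 2 * (L : ℤ) + 4) (m := L + 1 + 1) (by push_cast; ring),
      zpow_eq_sq_pow (a := 4 * (k : ℤ) + 4) (m := 2 * k + 1 + 1) (by push_cast; ring),
      zpow_eq_sq_pow (a := 2 * (k : ℤ) + 2) (m := k + 1) (by push_cast; ring)]
  · intro k hk hk'
    rw [mem_range] at hk
    rw [mem_Icc] at hk'
    rw [lowerEntry_of_lt (by omega), zero_mul]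

lemma coeff_lowerEntry_mul (hC : IsUltra C) (hq : q ≠ 0) (hP : ¬IsOfFinOrder (q ^ 2)) (i d : ℕ) :
    (lowerEntry q C (i + d) i).coeff d *
        (qp (q ^ 2) (q ^ 2) (2 * (i + d)) * qp (q ^ 2) (q ^ 2) i ^ 2) =
      (-1) ^ (i + d) * 2 ^ d * q ^ ((i + d) ^ 2 + i) * qp (q ^ 2) (q ^ 2) (i + d) ^ 2 *
        racahBasis (q ^ 2) 1 ((q ^ 2) ^ (i + d)) i := by
  have hp : q ^ 2 ≠ 0 := pow_ne_zero 2 hq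
  have hinv := qp_inv_pow_mul hp d i
  have hbasis := racahBasis_one_pow_mul hp i d
  have hexp : q ^ ((2 * (i + d) + 1) * d) * (q ^ 2) ^ ((i + 1).choose 2 + i * d) =
      q ^ ((i + d) ^ 2 + i) * (q ^ 2) ^ ((d + 1).choose 2 + d * i) := by
    have hi := sq_eq_two_mul_choose_add (i + 1)
    have hd := sq_eq_two_mul_choose_add (d + 1)
    rw [← pow_mul, ← pow_mul, ← pow_add, ← pow_add]
    congr 1
    linarith
  have hsign : ((-1 : ℂ) ^ i) ^ 2 = 1 := by
    rw [pow_right_comm, neg_one_sq, one_pow]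
  have hne := qp_self_ne_zero hP
  have := hne i; have := hne d; have := hne (2 * (i + d))
  rw [lowerEntry_of_le (Nat.le_add_right i d), coeff_C_mul, Nat.add_sub_cancel_left, hC.coeff_self,
    lowerCoeff, qBinomialCoeff, Nat.add_sub_cancel_left]
  have hA := pow_ne_zero ((d + 1).choose 2 + d * i) hp
  rw [add_comm d i] at hinv
  generalize racahBasis (q ^ 2) 1 ((q ^ 2) ^ (i + d)) i = B at *
  generalize qp ((q ^ 2) ^ (i + d))⁻¹ (q ^ 2) d = I at *
  field_simp
  refine mul_right_cancel₀ hA ?_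
  linear_combination
    q ^ ((2 * (i + d) + 1) * d) * qp (q ^ 2) (q ^ 2) (i + d) *
        (qp (q ^ 2) (q ^ 2) (i + d + i) * hinv - qp (q ^ 2) (q ^ 2) (i + d) * (-1) ^ d *
          ((-1) ^ i * hbasis + qp (q ^ 2) (q ^ 2) (i + d + i) * hsign)) +
      (-1) ^ (d + i) * qp (q ^ 2) (q ^ 2) (i + d) ^ 2 * B * qp (q ^ 2) (q ^ 2) d * hexp

lemma coeff_decoupledEntry_mul (hC : IsUltra C) (hq : q ≠ 0) (hP : ¬IsOfFinOrder (q ^ 2))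
    {k N : ℕ} (hk : k ≤ N) (L j : ℕ) :
    (decoupledEntry q L C N j k).coeff (N - k) * (qp (q ^ 2) (q ^ 2) k ^ 2 * q ^ k ^ 2) =
      (-1) ^ k * 2 ^ (N - k) * q ^ N * qp (q ^ 2) (q ^ 2) (2 * k) *
        (qp (q ^ 2) (q ^ 2) L * qp (q ^ 2) (q ^ 2) (L + 1) * qp (q ^ 2) (q ^ 2) N ^ 2) *
        (racahWeight (q ^ 2) L N k *
          racahFun (q ^ 2) ((q ^ 2) ^ L)⁻¹ ((q ^ 2) ^ N)⁻¹ j ((q ^ 2) ^ k)) := by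
  have hN := qp_self_add (q ^ 2) k (N - k)
  have hzpow : q ^ ((N : ℤ) - (k : ℤ) ^ 2) = q ^ N * (q ^ k ^ 2)⁻¹ := by
    rw [zpow_sub₀ hq, div_eq_mul_inv]
    norm_cast
  have := qp_self_ne_zero hP (N - k)
  have := qp_self_ne_zero hP k
  rw [Nat.add_sub_cancel' hk] at hN
  rw [decoupledEntry, coeff_C_mul, hC.coeff_self, qBinomialCoeff, decoupledCoeff, hzpow]
  field_simp
  rw [hN]
  ring

lemma coeff_lowerEntry_mul_decoupledEntry (hC : IsUltra C) (hq : q ≠ 0)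
    (hP : ¬IsOfFinOrder (q ^ 2)) {i k N : ℕ} (hi : i ≤ N) (hk : k ≤ N) (L j : ℕ) :
    (lowerEntry q C k i * decoupledEntry q L C N j k).coeff (N - i) *
        qp (q ^ 2) (q ^ 2) i ^ 2 =
      2 ^ (N - i) * q ^ (N + i) * (qp (q ^ 2) (q ^ 2) L * qp (q ^ 2) (q ^ 2) (L + 1) *
          qp (q ^ 2) (q ^ 2) N ^ 2) *
        (racahWeight (q ^ 2) L N k * (racahBasis (q ^ 2) 1 ((q ^ 2) ^ k) i *
          racahFun (q ^ 2) ((q ^ 2) ^ L)⁻¹ ((q ^ 2) ^ N)⁻¹ j ((q ^ 2) ^ k))) := by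
  rcases lt_or_ge k i with hki | hik
  · rw [lowerEntry_of_lt hki, racahBasis_pow_eq_zero (pow_ne_zero 2 hq) 1 hki]
    simp
  obtain ⟨d, rfl⟩ := Nat.exists_eq_add_of_le hik
  obtain ⟨e, rfl⟩ := Nat.exists_eq_add_of_le hk
  have hlower := coeff_lowerEntry_mul hC hq hP i d
  have hdecoupled := coeff_decoupledEntry_mul hC hq hP hk L j
  have hmul := coeff_mul_add_eq_of_natDegree_le (natDegree_lowerEntry_le (q := q) hC (i + d) i)
    (natDegree_decoupledEntry_le (q := q) hC L (i + d + e) j (i + d))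
  rw [show i + d - i + (i + d + e - (i + d)) = i + d + e - i by omega, Nat.add_sub_cancel_left,
    Nat.add_sub_cancel_left] at hmul
  rw [Nat.add_sub_cancel_left] at hdecoupled
  have hsign : ((-1 : ℂ) ^ (i + d)) ^ 2 = 1 := by
    rw [pow_right_comm, neg_one_sq, one_pow]
  have hne : qp (q ^ 2) (q ^ 2) (2 * (i + d)) *
      (qp (q ^ 2) (q ^ 2) (i + d) ^ 2 * q ^ (i + d) ^ 2) ≠ 0 := by
    simp [qp_self_ne_zero hP, hq]
  rw [hmul, show i + d + e - i = d + e by omega]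
  refine mul_right_cancel₀ hne ?_
  linear_combination
    (decoupledEntry q L C (i + d + e) j (i + d)).coeff e *
        (qp (q ^ 2) (q ^ 2) (i + d) ^ 2 * q ^ (i + d) ^ 2) * hlower +
      (-1) ^ (i + d) * 2 ^ d * q ^ ((i + d) ^ 2 + i) * qp (q ^ 2) (q ^ 2) (i + d) ^ 2 *
        racahBasis (q ^ 2) 1 ((q ^ 2) ^ (i + d)) i * hdecoupled +
      2 ^ (d + e) * q ^ ((i + d) ^ 2 + (i + d + e + i)) * qp (q ^ 2) (q ^ 2) (i + d) ^ 2 *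
        qp (q ^ 2) (q ^ 2) (2 * (i + d)) * (qp (q ^ 2) (q ^ 2) L * qp (q ^ 2) (q ^ 2) (L + 1) *
        qp (q ^ 2) (q ^ 2) (i + d + e) ^ 2) * (racahBasis (q ^ 2) 1 ((q ^ 2) ^ (i + d)) i *
        (racahWeight (q ^ 2) L (i + d + e) (i + d) *
          racahFun (q ^ 2) ((q ^ 2) ^ L)⁻¹ ((q ^ 2) ^ (i + d + e))⁻¹ j
            ((q ^ 2) ^ (i + d)))) * hsign

lemma coeff_entry_mul (hC : IsUltra C) (hq : q ≠ 0) (hP : ¬IsOfFinOrder (q ^ 2)) {i N : ℕ}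
    (hi : i ≤ N) (L j : ℕ) :
    (entry q L C N i j).coeff (N - i) * qp (q ^ 2) (q ^ 2) i ^ 2 =
      2 ^ (N - i) * q ^ (N + i) * (qp (q ^ 2) (q ^ 2) L * qp (q ^ 2) (q ^ 2) (L + 1) *
          qp (q ^ 2) (q ^ 2) N ^ 2) * racahPairing (q ^ 2) L N i j := by
  rw [entry, finsetSum_coeff, sum_mul, racahPairing, mul_sum]
  refine sum_congr rfl fun k hk => ?_
  have := mem_range.1 hk
  exact coeff_lowerEntry_mul_decoupledEntry hC hq hP hi (by omega) L j

lemma lowerCoeff_succ (hq : q ≠ 0) (hP : ¬IsOfFinOrder (q ^ 2)) (i D : ℕ) :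
    lowerCoeff q (i + 1 + D) (i + 1) * (1 - (q ^ 2) ^ (i + 1)) =
      lowerCoeff q (i + 1 + D) i * (q⁻¹ * ((q ^ 2) ^ (i + 1 + D))⁻¹ *
        (1 - (q ^ 2) ^ (i + 1 + D + (i + 1)))) := by
  have h₁ := one_sub_pow_ne_zero hP i.succ_pos
  have hne := qp_self_ne_zero hP
  have := hne i; have := hne (2 * (i + 1 + D))
  rw [lowerCoeff, lowerCoeff, ← add_assoc _ i 1, qp_self_succ, qp_self_succ,
    show i + 1 + D - (i + 1) = D by omega, show i + 1 + D - i = D + 1 by omega, mul_add_one _ D,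
    pow_add q]
  field_simp
  ring

lemma lowerEntry_succ_mul_base (hC : IsUltra C) (hq : q ≠ 0) (hP : ¬IsOfFinOrder (q ^ 2))
    (k i : ℕ) {z : ℂ} (hz : z ≠ 0) :
    (1 - (q ^ 2) ^ (i + 1) * z ^ 2) * joukowskiEval (lowerEntry q C k i) (q * z) -
        (1 - (q ^ 2) ^ (i + 1)) * z * joukowskiEval (lowerEntry q C k (i + 1)) (q * z) =
      q ^ i * (q ^ k)⁻¹ * (1 - (q ^ 2) ^ (k + 1) * z ^ 2) *
        joukowskiEval (lowerEntry q C k i) z := by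
  rcases lt_trichotomy k i with h | rfl | h
  · simp only [lowerEntry_of_lt h, lowerEntry_of_lt (h.trans i.lt_succ_self), joukowskiEval_zero,
      mul_zero, sub_zero]
  · rw [lowerEntry_of_le le_rfl, lowerEntry_of_lt k.lt_succ_self, Nat.sub_self, hC.apply_zero,
      mul_inv_cancel₀ (pow_ne_zero k hq)]
    simp only [joukowskiEval_C_mul, joukowskiEval_zero, joukowskiEval_one]
    ring
  · obtain ⟨D, rfl⟩ := Nat.exists_eq_add_of_le (Nat.succ_le_of_lt h)
    have hbase := hC.succ_mul_base hq hP i D hz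
    have hcoeff := lowerCoeff_succ hq hP i D
    have hqpow : q ^ i * (q ^ (i + 1 + D))⁻¹ = (q ^ (D + 1))⁻¹ := by
      rw [show i + 1 + D = i + (D + 1) by ring, pow_add]
      field_simp
    rw [Nat.succ_eq_add_one, hqpow, lowerEntry_of_le (by omega), lowerEntry_of_le (by omega),
      show i + 1 + D - i = D + 1 by omega, show i + 1 + D - (i + 1) = D by omega]
    simp only [joukowskiEval_C_mul]
    linear_combination lowerCoeff q (i + 1 + D) i * hbase -
      z * joukowskiEval (C (q ^ 2) ((q ^ 2) ^ (i + 1 + D))⁻¹ D) (q * z) * hcoeff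

lemma lowerEntry_succ_mul_base_inv (hC : IsUltra C) (hq : q ≠ 0) (hP : ¬IsOfFinOrder (q ^ 2))
    (k i : ℕ) {z : ℂ} (hz : z ≠ 0) :
    (z ^ 2 - (q ^ 2) ^ (i + 1)) * joukowskiEval (lowerEntry q C k i) (q⁻¹ * z) -
        (1 - (q ^ 2) ^ (i + 1)) * z * joukowskiEval (lowerEntry q C k (i + 1)) (q⁻¹ * z) =
      q ^ i * (q ^ k)⁻¹ * (z ^ 2 - (q ^ 2) ^ (k + 1)) *
        joukowskiEval (lowerEntry q C k i) z := by
  have h := lowerEntry_succ_mul_base hC hq hP k i (inv_ne_zero hz)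
  have hinv : q * z⁻¹ = (q⁻¹ * z)⁻¹ := by rw [mul_inv, inv_inv]
  rw [hinv] at h
  simp only [joukowskiEval_inv] at h
  have hz2 : z ^ 2 * z⁻¹ ^ 2 = 1 := by rw [← mul_pow, mul_inv_cancel₀ hz, one_pow]
  have hz1 : z ^ 2 * z⁻¹ = z := by field_simp
  linear_combination z ^ 2 * h +
    ((q ^ 2) ^ (i + 1) * joukowskiEval (lowerEntry q C k i) (q⁻¹ * z) -
      q ^ i * (q ^ k)⁻¹ * (q ^ 2) ^ (k + 1) * joukowskiEval (lowerEntry q C k i) z) * hz2 +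
    (1 - (q ^ 2) ^ (i + 1)) * joukowskiEval (lowerEntry q C k (i + 1)) (q⁻¹ * z) * hz1

lemma entry_difference_equation (hC : IsUltra C) (hq : q ≠ 0) (hP : ¬IsOfFinOrder (q ^ 2))
    (L N i j : ℕ) {z : ℂ} (hz : z ≠ 0) :
    (1 - (q ^ 2) ^ (i + 1) * z ^ 2) * joukowskiEval (entry q L C N i j) (q * z) -
        (z ^ 2 - (q ^ 2) ^ (i + 1)) * joukowskiEval (entry q L C N i j) (q⁻¹ * z) =
      q ^ i * ((q ^ N)⁻¹ + q ^ (N + 2)) * (1 - z ^ 2) * joukowskiEval (entry q L C N i j) z +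
        (1 - (q ^ 2) ^ (i + 1)) * z * (joukowskiEval (entry q L C N (i + 1) j) (q * z) -
          joukowskiEval (entry q L C N (i + 1) j) (q⁻¹ * z)) := by
  simp only [entry, joukowskiEval_sum_mul, mul_sum, ← sum_sub_distrib, ← sum_add_distrib]
  refine sum_congr rfl fun k hk => ?_
  obtain ⟨e, rfl⟩ := Nat.exists_eq_add_of_le (show k ≤ N by have := mem_range.1 hk; omega)
  have hup := lowerEntry_succ_mul_base hC hq hP k i hz
  have hdown := lowerEntry_succ_mul_base_inv hC hq hP k i hz
  have hrow := hC.difference_equation hq hP ((q ^ 2) ^ (k + 1)) e hz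
  have hqpow : (q ^ k)⁻¹ * ((q ^ e)⁻¹ + (q ^ 2) ^ (k + 1) * q ^ e) =
      (q ^ (k + e))⁻¹ + q ^ (k + e + 2) := by
    rw [pow_add q k e]
    field_simp
    ring
  rw [decoupledEntry, Nat.add_sub_cancel_left, ← hqpow]
  simp only [joukowskiEval_C_mul]
  linear_combination decoupledCoeff q L (k + e) j k *
    (joukowskiEval (C (q ^ 2) ((q ^ 2) ^ (k + 1)) e) (q * z) * hup -
      joukowskiEval (C (q ^ 2) ((q ^ 2) ^ (k + 1)) e) (q⁻¹ * z) * hdown +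
      q ^ i * (q ^ k)⁻¹ * joukowskiEval (lowerEntry q C k i) z * hrow)

lemma eigenvalue_sub_ne_zero (hq : q ≠ 0) (hP : ¬IsOfFinOrder q) {i e N : ℕ} (h : i + e < N) :
    (q ^ e)⁻¹ + (q ^ 2) ^ (i + 1) * q ^ e - q ^ i * ((q ^ N)⁻¹ + q ^ (N + 2)) ≠ 0 := by
  obtain ⟨d, rfl⟩ := Nat.exists_eq_add_of_lt h
  have hfactor : (q ^ e)⁻¹ + (q ^ 2) ^ (i + 1) * q ^ e -
      q ^ i * ((q ^ (i + e + d + 1))⁻¹ + q ^ (i + e + d + 1 + 2)) =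
      -(q ^ (e + d + 1))⁻¹ * (1 - q ^ (d + 1)) * (1 - q ^ (2 * i + 2 * e + d + 3)) := by
    field_simp
    ring
  rw [hfactor]
  exact mul_ne_zero (mul_ne_zero (neg_ne_zero.2 (inv_ne_zero (pow_ne_zero _ hq)))
    (one_sub_pow_ne_zero hP d.succ_pos)) (one_sub_pow_ne_zero hP (by omega))

lemma coeff_entry_eq_zero_of_natDegree_le (hC : IsUltra C) (hq : q ≠ 0)
    (hP : ¬IsOfFinOrder (q ^ 2)) {L N i j m : ℕ} (hL : j ≤ L) (hN : j ≤ N) (hij : i < j)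
    (hm : (entry q L C N i j).natDegree ≤ m)
    (hm' : (entry q L C N (i + 1) j).natDegree ≤ m) : (entry q L C N i j).coeff m = 0 := by
  rcases lt_trichotomy (i + m) N with h | rfl | h
  · exact (mul_eq_zero.1 (sub_mul_coeff_eq_zero_of_difference_equation hq hm hm' fun z hz =>
      entry_difference_equation hC hq hP L N i j hz)).resolve_left
        (eigenvalue_sub_ne_zero hq (fun h => hP h.pow) h)
  · have hcoeff := coeff_entry_mul hC hq hP (Nat.le_add_right i m) L j
    rw [racahPairing_eq_zero (pow_ne_zero 2 hq) hP hL hN hij, mul_zero,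
      Nat.add_sub_cancel_left] at hcoeff
    exact (mul_eq_zero.1 hcoeff).resolve_right (pow_ne_zero 2 (qp_self_ne_zero hP i))
  · refine coeff_eq_zero_of_natDegree_lt ((natDegree_entry_le hC L N i j).trans_lt ?_)
    omega

lemma coeff_eq_zero_of_forall_natDegree_le {f : ℂ[X]} {b : ℕ}
    (h : ∀ m, b ≤ m → f.natDegree ≤ m → f.coeff m = 0) {m : ℕ} (hm : b ≤ m) : f.coeff m = 0 := by
  by_contra hne
  have hlead := h f.natDegree (hm.trans (le_natDegree_of_ne_zero hne)) le_rfl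
  rw [coeff_natDegree, leadingCoeff_eq_zero] at hlead
  exact hne (by rw [hlead, coeff_zero])

lemma coeff_entry_eq_zero_of_le (hC : IsUltra C) (hq : q ≠ 0) (hP : ¬IsOfFinOrder (q ^ 2))
    {L n i j : ℕ} (hj : j ≤ L) (hij : i ≤ j) {m : ℕ} (hm : n + i < m + j) :
    (entry q L C (n + j) i j).coeff m = 0 := by
  obtain ⟨d, hd⟩ := Nat.exists_eq_add_of_le hij
  induction d generalizing i m with
  | zero =>
    refine coeff_eq_zero_of_natDegree_lt ((natDegree_entry_le hC L (n + j) i j).trans_lt ?_)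
    omega
  | succ d ih =>
    refine coeff_eq_zero_of_forall_natDegree_le (b := n + i + 1 - j) (fun e he hdeg => ?_)
      (by omega)
    refine coeff_entry_eq_zero_of_natDegree_le hC hq hP hj (by omega) (by omega) hdeg
      (natDegree_le_iff_coeff_eq_zero.2 fun r hr => ih (by omega) (by omega) (by omega))

lemma natDegree_entry_add_le (hC : IsUltra C) (hq : q ≠ 0) (hP : ¬IsOfFinOrder (q ^ 2))
    {L j : ℕ} (hj : j ≤ L) (n i : ℕ) : (entry q L C (n + j) i j).natDegree ≤ n := by
  rcases le_or_gt i j with h | h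
  · exact natDegree_le_iff_coeff_eq_zero.2 fun m hm =>
      coeff_entry_eq_zero_of_le hC hq hP hj h (by omega)
  · exact (natDegree_entry_le hC L (n + j) i j).trans (by omega)

lemma coeff_entry_of_ne (hC : IsUltra C) (hq : q ≠ 0) (hP : ¬IsOfFinOrder (q ^ 2))
    {L i j : ℕ} (hj : j ≤ L) (hij : i ≠ j) (n : ℕ) : (entry q L C (n + j) i j).coeff n = 0 := by
  rcases hij.lt_or_gt with h | h
  · exact coeff_entry_eq_zero_of_le hC hq hP hj h.le (by omega)
  · rcases le_or_gt i (n + j) with hi | hi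
    · refine coeff_eq_zero_of_natDegree_lt ((natDegree_entry_le hC L (n + j) i j).trans_lt ?_)
      omega
    · rw [entry_eq_zero (by omega), coeff_zero]

lemma coeff_entry_self (hC : IsUltra C) (hq : q ≠ 0) (hP : ¬IsOfFinOrder (q ^ 2)) (j m n : ℕ) :
    (entry q (j + m) C (n + j) j j).coeff n =
      2 ^ n * q ^ n * qp ((q ^ 2) ^ (j + 1)) (q ^ 2) n * qp ((q ^ 2) ^ (m + 1)) (q ^ 2) n /
        (qp (q ^ 2) (q ^ 2) n * qp ((q ^ 2) ^ (j + m + 2)) (q ^ 2) n) := by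
  have hp : q ^ 2 ≠ 0 := pow_ne_zero 2 hq
  have hcoeff := coeff_entry_mul hC hq hP (Nat.le_add_left j n) (j + m) j
  have hpair := racahPairing_self_mul hp hP j m n
  have hj := qp_self_add (q ^ 2) j n
  have hm := qp_self_add (q ^ 2) m n
  have hL := qp_self_add (q ^ 2) (j + m + 1) n
  rw [show j + m + 1 + n = j + m + n + 1 by ring] at hL
  rw [Nat.add_sub_cancel, add_comm n j] at hcoeff
  rw [add_comm n j]
  have hne := qp_self_ne_zero hP
  have hden := qp_pow_ne_zero hP (j + m + 1) n
  rw [hj, show q ^ (j + n + j) = q ^ n * (q ^ 2) ^ j by ring] at hcoeff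
  rw [hj, hm, hL] at hpair
  rw [eq_div_iff (mul_ne_zero (hne n) hden)]
  refine mul_right_cancel₀ (mul_ne_zero (pow_ne_zero 2 (hne j)) (hne m)) ?_
  linear_combination
    qp (q ^ 2) (q ^ 2) n * qp ((q ^ 2) ^ (j + m + 1 + 1)) (q ^ 2) n * qp (q ^ 2) (q ^ 2) m *
        hcoeff +
      2 ^ n * q ^ n * qp (q ^ 2) (q ^ 2) j * qp ((q ^ 2) ^ (j + 1)) (q ^ 2) n * hpair

lemma Gam_apply_self (q : ℂ) {L : ℕ} (n : ℕ) (i : Fin (L + 1)) :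
    Gam q L n i i =
      2 ^ n * q ^ n * qp ((q ^ 2) ^ ((i : ℕ) + 1)) (q ^ 2) n *
          qp ((q ^ 2) ^ (L - i + 1)) (q ^ 2) n /
        (qp (q ^ 2) (q ^ 2) n * qp ((q ^ 2) ^ (L + 2)) (q ^ 2) n) := by
  rw [Gam, diagonal_apply_eq,
    zpow_eq_sq_pow (a := 2 * ((i : ℕ) : ℤ) + 2) (m := i + 1) (by push_cast; ring),
    zpow_eq_sq_pow (a := 2 * (L : ℤ) - 2 * ((i : ℕ) : ℤ) + 2) (m := L - i + 1) (by omega),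
    zpow_eq_sq_pow (a := 2 * (L : ℤ) + 4) (m := L + 2) (by push_cast; ring)]

lemma isUnit_det_Gam (hq : q ≠ 0) (hP : ¬IsOfFinOrder (q ^ 2)) (L n : ℕ) :
    IsUnit (Gam q L n).det := by
  rw [isUnit_iff_ne_zero, Gam, det_diagonal]
  refine prod_ne_zero_iff.2 fun i _ => ?_
  have h := Gam_apply_self q n i
  rw [Gam, diagonal_apply_eq] at h
  rw [h]
  exact div_ne_zero (mul_ne_zero (mul_ne_zero (mul_ne_zero (pow_ne_zero n two_ne_zero)
      (pow_ne_zero n hq)) (qp_pow_ne_zero hP i n)) (qp_pow_ne_zero hP (L - i) n))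
    (mul_ne_zero (qp_self_ne_zero hP n) (qp_pow_ne_zero hP (L + 1) n))

lemma coeff_Pm (hC : IsUltra C) (hq : q ≠ 0) (hP : ¬IsOfFinOrder (q ^ 2)) (L n : ℕ)
    (i j : Fin (L + 1)) : (Pm q L C n i j).coeff n = Gam q L n i j := by
  rw [Pm_apply hq hP]
  rcases eq_or_ne i j with rfl | hij
  · obtain ⟨m, hm⟩ := Nat.exists_eq_add_of_le (Nat.lt_succ_iff.1 i.2)
    have h := coeff_entry_self hC hq hP i m n
    rw [← hm] at h
    rw [h, Gam_apply_self, show L - (i : ℕ) = m by omega]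
  · rw [coeff_entry_of_ne hC hq hP (Nat.lt_succ_iff.1 j.2) (Fin.val_ne_of_ne hij), Gam,
      diagonal_apply_ne _ hij]

end Entries

theorem stmt1_general (q : ℂ) (hq : q ≠ 0) (hP : ¬IsOfFinOrder q) (L : ℕ)
    (C : ℂ → ℂ → ℕ → Polynomial ℂ) (hC : IsUltra C) (n : ℕ) :
    (∀ i j : Fin (L + 1), (Pm q L C n i j).degree ≤ (n : ℕ)) ∧
      (∀ i j : Fin (L + 1), (Pm q L C n i j).coeff n = Gam q L n i j) ∧
      IsUnit (Gam q L n).det := by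
  have hP₂ : ¬IsOfFinOrder (q ^ 2) := by simpa [isOfFinOrder_pow] using hP
  refine ⟨fun i j => degree_le_of_natDegree_le ?_, coeff_Pm hC hq hP₂ L n,
    isUnit_det_Gam hq hP₂ L n⟩
  rw [Pm_apply hq hP₂]
  exact natDegree_entry_add_le hC hq hP₂ (Nat.lt_succ_iff.1 j.2) n i

/-- each entry of `P_n` has degree at most `n`, the coefficient of `x^n`
in `P_n` is the diagonal matrix `Γ_n` with the stated entries, and this leading
coefficient is nonsingular; hence `P_n` has degree exactly `n` with nonsingular leading
coefficient. -/
theorem stmt1 (q : ℝ) (hq0 : 0 < q) (hq1 : q < 1) (L : ℕ)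
    (C : ℂ → ℂ → ℕ → Polynomial ℂ) (hC : IsUltra C) (n : ℕ) :
    (∀ i j : Fin (L + 1), (Pm (q : ℂ) L C n i j).degree ≤ (n : ℕ)) ∧
      (∀ i j : Fin (L + 1), (Pm (q : ℂ) L C n i j).coeff n = Gam (q : ℂ) L n i j) ∧
      IsUnit (Gam (q : ℂ) L n).det := by
  refine stmt1_general q (by exact_mod_cast hq0.ne') (fun h => ?_) L C hC n
  exact hq1.ne (by simpa [abs_of_pos hq0] using h.norm_eq_one)

end
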